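/- arXiv:cs/0202011 — 2 statements merged into one kernel-verified Lean document; each statement's English description precedes it below -/
import Mathlib

section
/- Under the hypotheses of Lemma 5 (hexagon abcdef, a the only reflex vertex apart from possibly c, e, and c does not see e), the vertex a lies in the open triangle △(cde), and the vertex a sees each of c, d, and e. -/
open scoped BigOperators

/-- Points in the plane. -/
abbrev Pt := ℝ × ℝ

/-- 2×2 determinant (cross product) of two plane vectors. -/
noncomputable def det2 (p q : Pt) : ℝ := p.1 * q.2 - p.2 * q.1

/-- Open half-plane strictly to the left of the directed line from `p` to `q`. -/
def Lhp (p q : Pt) : Set Pt := {x | 0 < det2 (q - p) (x - p)}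

/-- Open half-plane strictly to the right of the directed line from `p` to `q`. -/
def Rhp (p q : Pt) : Set Pt := {x | det2 (q - p) (x - p) < 0}

/-- The boundary of the polygon with vertices `v 0, …, v (n-1)`:
the union of its (cyclically consecutive) edges. -/
def polyBoundary {n : ℕ} [NeZero n] (v : Fin n → Pt) : Set Pt :=
  ⋃ i : Fin n, segment ℝ (v i) (v (i + 1))

/-- `v` describes a simple polygon: at least 3 distinct vertices, and two distinct
edges may only meet at a common endpoint. -/
def IsSimplePolygon {n : ℕ} [NeZero n] (v : Fin n → Pt) : Prop :=
  3 ≤ n ∧ Function.Injective v ∧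
    ∀ i j : Fin n, i ≠ j →
      segment ℝ (v i) (v (i + 1)) ∩ segment ℝ (v j) (v (j + 1)) ⊆
        ({v i, v (i + 1)} ∩ {v j, v (j + 1)} : Set Pt)

/-- The interior of the polygon: the union of the bounded connected components of the
complement of the boundary. -/
def polyInterior {n : ℕ} [NeZero n] (v : Fin n → Pt) : Set Pt :=
  {x | x ∉ polyBoundary v ∧
    Bornology.IsBounded (connectedComponentIn (polyBoundary v)ᶜ x)}

/-- The (closed) polygonal region: interior together with boundary. -/
def polyRegion {n : ℕ} [NeZero n] (v : Fin n → Pt) : Set Pt :=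
  polyBoundary v ∪ polyInterior v

/-- Twice the signed area of the polygon. -/
noncomputable def signedArea2 {n : ℕ} [NeZero n] (v : Fin n → Pt) : ℝ :=
  ∑ i : Fin n, det2 (v i) (v (i + 1))

/-- The vertices are listed in counterclockwise order. -/
def IsCCW {n : ℕ} [NeZero n] (v : Fin n → Pt) : Prop := 0 < signedArea2 v

/-- The vertex `v i` of a counterclockwise polygon is strictly convex
(interior angle strictly less than 180°). -/
def StrictlyConvexAt {n : ℕ} [NeZero n] (v : Fin n → Pt) (i : Fin n) : Prop :=
  0 < det2 (v i - v (i - 1)) (v (i + 1) - v i)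

/-- The vertex `v i` of a counterclockwise polygon is reflex
(interior angle greater than or equal to 180°). -/
def ReflexAt {n : ℕ} [NeZero n] (v : Fin n → Pt) (i : Fin n) : Prop :=
  det2 (v i - v (i - 1)) (v (i + 1) - v i) ≤ 0

/-- The wedge of vertex `v i`:  `L(v⁻, v) ∩ R(v⁺, v) ∩ interior P`. -/
def Wedge {n : ℕ} [NeZero n] (v : Fin n → Pt) (i : Fin n) : Set Pt :=
  Lhp (v (i - 1)) (v i) ∩ Rhp (v (i + 1)) (v i) ∩ polyInterior v

/-- `x` sees `y` inside the polygon `v`: the segment `xy` is contained in the region. -/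
def Sees {n : ℕ} [NeZero n] (v : Fin n → Pt) (x y : Pt) : Prop :=
  segment ℝ x y ⊆ polyRegion v

/-- The kernel of the polygon: the points of the region that see every point of it. -/
def polyKernel {n : ℕ} [NeZero n] (v : Fin n → Pt) : Set Pt :=
  {x ∈ polyRegion v | ∀ y ∈ polyRegion v, segment ℝ x y ⊆ polyRegion v}

/-- The open triangle on three points. -/
def openTriangle (a b c : Pt) : Set Pt := interior (convexHull ℝ {a, b, c})

/-- `a b c d` (in counterclockwise order) form a strictly convex quadrilateral. -/
def StrictConvexQuad (a b c d : Pt) : Prop :=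
  0 < det2 (b - a) (c - b) ∧ 0 < det2 (c - b) (d - c) ∧
    0 < det2 (d - c) (a - d) ∧ 0 < det2 (a - d) (b - a)

/-- The closed region of a quadrilateral cell. -/
noncomputable def quadSet (q : Pt × Pt × Pt × Pt) : Set Pt :=
  convexHull ℝ {q.1, q.2.1, q.2.2.1, q.2.2.2}

/-- The closed region of a triangular cell. -/
noncomputable def triSet (t : Pt × Pt × Pt) : Set Pt :=
  convexHull ℝ {t.1, t.2.1, t.2.2}

/-- The vertices of a quadrilateral cell. -/
noncomputable def quadVerts (q : Pt × Pt × Pt × Pt) : Finset Pt :=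
  {q.1, q.2.1, q.2.2.1, q.2.2.2}

/-- The vertices of a triangular cell. -/
noncomputable def triVerts (t : Pt × Pt × Pt) : Finset Pt :=
  {t.1, t.2.1, t.2.2}

/-- A strictly convex quadrangulation of a finite planar point set `S`:
a decomposition of `conv S` into strictly convex quadrilaterals and at most one
(nondegenerate) triangle, with pairwise disjoint interiors, whose vertex set contains
`S`, and such that no point of `S` is interior to a cell. -/
structure ConvexQuadrangulation (S : Finset Pt) where
  quads : Finset (Pt × Pt × Pt × Pt)
  tris : Finset (Pt × Pt × Pt)
  tris_card : tris.card ≤ 1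
  quads_convex : ∀ q ∈ quads, StrictConvexQuad q.1 q.2.1 q.2.2.1 q.2.2.2
  tris_nondeg : ∀ t ∈ tris, 0 < det2 (t.2.1 - t.1) (t.2.2 - t.2.1)
  covers : ((⋃ q ∈ quads, quadSet q) ∪ ⋃ t ∈ tris, triSet t) = convexHull ℝ (S : Set Pt)
  cells_disjoint : ((quadSet '' quads) ∪ (triSet '' tris)).Pairwise
    fun A B => interior A ∩ interior B = ∅
  verts_cover : (S : Set Pt) ⊆
    ((quads.biUnion quadVerts ∪ tris.biUnion triVerts : Finset Pt) : Set Pt)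
  no_pt_in_quad_interior : ∀ q ∈ quads, ∀ p ∈ S, p ∉ interior (quadSet q)
  no_pt_in_tri_interior : ∀ t ∈ tris, ∀ p ∈ S, p ∉ interior (triSet t)

/-- The Steiner points of a quadrangulation: vertices of the decomposition not in `S`. -/
noncomputable def steinerPoints (S : Finset Pt) (Q : ConvexQuadrangulation S) : Finset Pt :=
  (Q.quads.biUnion quadVerts ∪ Q.tris.biUnion triVerts) \ S

/-- Orientation determinant. -/
noncomputable def ori (p q r : Pt) : ℝ := det2 (q - p) (r - p)

lemma ori_def (p q r : Pt) :
    ori p q r = (q.1 - p.1) * (r.2 - p.2) - (q.2 - p.2) * (r.1 - p.1) := by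
  simp [ori, det2]

lemma ori_rot (p q r : Pt) : ori q r p = ori p q r := by
  simp only [ori_def]; ring

lemma ori_continuous (p q : Pt) : Continuous (fun x => ori p q x) := by
  simp only [ori_def]; fun_prop

/-- Closed triangle as an intersection of half planes. -/
def clTri (p q r : Pt) : Set Pt := {x | 0 ≤ ori p q x ∧ 0 ≤ ori q r x ∧ 0 ≤ ori r p x}

/-- Open triangle as an intersection of half planes. -/
def opTri (p q r : Pt) : Set Pt := {x | 0 < ori p q x ∧ 0 < ori q r x ∧ 0 < ori r p x}

lemma opTri_open (p q r : Pt) : IsOpen (opTri p q r) := by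
  refine (isOpen_lt continuous_const (ori_continuous p q)).inter
    ((isOpen_lt continuous_const (ori_continuous q r)).inter
      (isOpen_lt continuous_const (ori_continuous r p)))

lemma clTri_closed (p q r : Pt) : IsClosed (clTri p q r) := by
  refine (isClosed_le continuous_const (ori_continuous p q)).inter
    ((isClosed_le continuous_const (ori_continuous q r)).inter
      (isClosed_le continuous_const (ori_continuous r p)))

lemma opTri_sub (p q r : Pt) : opTri p q r ⊆ clTri p q r :=
  fun _ h => ⟨h.1.le, h.2.1.le, h.2.2.le⟩

lemma clTri_rot (p q r : Pt) : clTri q r p = clTri p q r := by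
  ext x; simp only [clTri, Set.mem_ofPred_eq]; tauto

lemma clTri_hull {p q r : Pt} (h : 0 < ori p q r) : clTri p q r ⊆ convexHull ℝ {p, q, r} := by
  intro x hx
  obtain ⟨h1, h2, h3⟩ := hx
  have hs : ori q r x / ori p q r + ori r p x / ori p q r + ori p q x / ori p q r = 1 := by
    rw [← add_div, ← add_div, div_eq_one_iff_eq h.ne']
    simp only [ori_def]; ring
  have hxe : x = (ori q r x / ori p q r) • p + (ori r p x / ori p q r) • q
      + (ori p q x / ori p q r) • r := by
    ext
    · simp only [Prod.fst_add, Prod.smul_fst, smul_eq_mul]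
      field_simp
      simp only [ori_def]; ring
    · simp only [Prod.snd_add, Prod.smul_snd, smul_eq_mul]
      field_simp
      simp only [ori_def]; ring
  rw [hxe]
  have hc := convex_convexHull ℝ ({p, q, r} : Set Pt)
  have hp : p ∈ convexHull ℝ ({p, q, r} : Set Pt) := subset_convexHull ℝ _ (by simp)
  have hq : q ∈ convexHull ℝ ({p, q, r} : Set Pt) := subset_convexHull ℝ _ (by simp)
  have hr : r ∈ convexHull ℝ ({p, q, r} : Set Pt) := subset_convexHull ℝ _ (by simp)
  have key := hc.sum_mem (t := Finset.univ)
    (w := ![ori q r x / ori p q r, ori r p x / ori p q r, ori p q x / ori p q r])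
    (z := ![p, q, r])
    (by intro i _; fin_cases i <;> simp <;> positivity)
    (by simpa [Fin.sum_univ_three] using hs)
    (by intro i _; fin_cases i <;> simpa)
  simpa [Fin.sum_univ_three] using key

lemma clTri_bounded {p q r : Pt} (h : 0 < ori p q r) : Bornology.IsBounded (clTri p q r) := by
  refine Bornology.IsBounded.subset ?_ (clTri_hull h)
  rw [isBounded_convexHull]
  exact (Set.toFinite _).isBounded

lemma seg_sub {p q r : Pt} (h : 0 < ori p q r) : segment ℝ p q ⊆ clTri p q r := by
  rintro x ⟨s, t, hs, ht, hst, rfl⟩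
  have e1 : ori p q (s • p + t • q) = 0 := by
    obtain rfl : s = 1 - t := by linarith
    simp only [ori_def, Prod.fst_add, Prod.smul_fst, smul_eq_mul, Prod.snd_add, Prod.smul_snd]
    ring
  have e2 : ori q r (s • p + t • q) = s * ori p q r := by
    obtain rfl : s = 1 - t := by linarith
    simp only [ori_def, Prod.fst_add, Prod.smul_fst, smul_eq_mul, Prod.snd_add, Prod.smul_snd]
    ring
  have e3 : ori r p (s • p + t • q) = t * ori p q r := by
    obtain rfl : s = 1 - t := by linarith
    simp only [ori_def, Prod.fst_add, Prod.smul_fst, smul_eq_mul, Prod.snd_add, Prod.smul_snd]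
    ring
  refine ⟨e1.ge, ?_, ?_⟩
  · rw [e2]; positivity
  · rw [e3]; positivity

/-- A point of the triangle on the line of the edge `pq` is in the segment. -/
lemma mem_edge {p q r x : Pt} (h : 0 < ori p q r) (hx : x ∈ clTri p q r) (h0 : ori p q x = 0) :
    ∃ s t : ℝ, 0 ≤ s ∧ 0 ≤ t ∧ s + t = 1 ∧ s • p + t • q = x := by
  obtain ⟨h1, h2, h3⟩ := hx
  have hs : ori q r x + ori r p x = ori p q r := by
    have : ori q r x + ori r p x + ori p q x = ori p q r := by simp only [ori_def]; ring
    linarith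
  refine ⟨ori q r x / ori p q r, ori r p x / ori p q r, by positivity, by positivity, ?_, ?_⟩
  · rw [← add_div, hs, div_self h.ne']
  · have k1 : ori q r x * p.1 + ori r p x * q.1 + ori p q x * r.1 = ori p q r * x.1 := by
      simp only [ori_def]; ring
    have k2 : ori q r x * p.2 + ori r p x * q.2 + ori p q x * r.2 = ori p q r * x.2 := by
      simp only [ori_def]; ring
    rw [h0] at k1 k2
    ext
    · simp only [Prod.fst_add, Prod.smul_fst, smul_eq_mul]
      field_simp; linarith
    · simp only [Prod.snd_add, Prod.smul_snd, smul_eq_mul]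
      field_simp; linarith

/-- `(p,q,r)` is, up to rotation, a member of the list. -/
def InL (L : List (Pt × Pt × Pt)) (p q r : Pt) : Prop :=
  (p, q, r) ∈ L ∨ (q, r, p) ∈ L ∨ (r, p, q) ∈ L

lemma region_of_tris {n : ℕ} [NeZero n] (v : Fin n → Pt) (L : List (Pt × Pt × Pt))
    (hpos : ∀ t ∈ L, 0 < ori t.1 t.2.1 t.2.2)
    (hv : ∀ t ∈ L, t.1 ∈ polyBoundary v ∧ t.2.1 ∈ polyBoundary v ∧ t.2.2 ∈ polyBoundary v)
    (hE : ∀ p q r, InL L p q r → segment ℝ p q ⊆ polyBoundary v ∨ ∃ s, InL L q p s)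
    {p q r : Pt} (hm : (p, q, r) ∈ L) : clTri p q r ⊆ polyRegion v := by
  have hpos' : ∀ p q r, InL L p q r → 0 < ori p q r := by
    rintro p q r (h | h | h)
    · exact hpos _ h
    · rw [← ori_rot]; exact hpos _ h
    · rw [ori_rot r p q]; exact hpos _ h
  have hv' : ∀ p q r, InL L p q r → p ∈ polyBoundary v ∧ q ∈ polyBoundary v := by
    rintro p q r (h | h | h)
    · exact ⟨(hv _ h).1, (hv _ h).2.1⟩
    · exact ⟨(hv _ h).2.2, (hv _ h).1⟩
    · exact ⟨(hv _ h).2.1, (hv _ h).2.2⟩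
  set U : Set Pt := ⋃ t ∈ {t | t ∈ L}, clTri t.1 t.2.1 t.2.2 with hU
  have hUsub : ∀ p q r, InL L p q r → clTri p q r ⊆ U := by
    rintro p q r (h | h | h)
    · exact fun x hx => Set.mem_iUnion₂.2 ⟨_, h, hx⟩
    · rw [← clTri_rot p q r]
      exact fun x hx => Set.mem_iUnion₂.2 ⟨_, h, hx⟩
    · rw [clTri_rot r p q]
      exact fun x hx => Set.mem_iUnion₂.2 ⟨_, h, hx⟩
  have hfin : ({t | t ∈ L} : Set (Pt × Pt × Pt)).Finite := List.finite_toSet L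
  have hUcl : IsClosed U := hfin.isClosed_biUnion (fun t _ => clTri_closed _ _ _)
  have hUb : Bornology.IsBounded U := by
    rw [hU, Bornology.isBounded_biUnion hfin]
    exact fun t ht => clTri_bounded (hpos t ht)
  -- the edge case
  have edge : ∀ p q r x, InL L p q r → x ∉ polyBoundary v → x ∈ clTri p q r → ori p q x = 0 →
      U ∈ nhds x := by
    intro p q r x hin hxB hx h0
    obtain ⟨s, t, hs, ht, hst, rfl⟩ := mem_edge (hpos' _ _ _ hin) hx h0
    rcases hE p q r hin with hb | ⟨w, hw⟩
    · exact absurd (hb ⟨s, t, hs, ht, hst, rfl⟩) hxB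
    have hs0 : 0 < s := by
      rcases hs.lt_or_eq with h | h
      · exact h
      · exfalso; apply hxB
        obtain rfl : t = 1 := by linarith
        rw [← h]; simpa using (hv' _ _ _ hin).2
    have ht0 : 0 < t := by
      rcases ht.lt_or_eq with h | h
      · exact h
      · exfalso; apply hxB
        obtain rfl : s = 1 := by linarith
        rw [← h]; simpa using (hv' _ _ _ hin).1
    have P1 := hpos' _ _ _ hin
    have P2 := hpos' _ _ _ hw
    have e1 : ori q r (s • p + t • q) = s * ori p q r := by
      obtain rfl : s = 1 - t := by linarith
      simp only [ori_def, Prod.fst_add, Prod.smul_fst, smul_eq_mul, Prod.snd_add, Prod.smul_snd]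
      ring
    have e2 : ori r p (s • p + t • q) = t * ori p q r := by
      obtain rfl : s = 1 - t := by linarith
      simp only [ori_def, Prod.fst_add, Prod.smul_fst, smul_eq_mul, Prod.snd_add, Prod.smul_snd]
      ring
    have e3 : ori p w (s • p + t • q) = t * ori q p w := by
      obtain rfl : s = 1 - t := by linarith
      simp only [ori_def, Prod.fst_add, Prod.smul_fst, smul_eq_mul, Prod.snd_add, Prod.smul_snd]
      ring
    have e4 : ori w q (s • p + t • q) = s * ori q p w := by
      obtain rfl : s = 1 - t := by linarith
      simp only [ori_def, Prod.fst_add, Prod.smul_fst, smul_eq_mul, Prod.snd_add, Prod.smul_snd]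
      ring
    have n : ∀ y z, 0 < ori y z (s • p + t • q) →
        ∀ᶠ x in nhds (s • p + t • q), 0 < ori y z x := fun y z h =>
      (ori_continuous y z).continuousAt.eventually_const_lt h
    filter_upwards [n q r (by rw [e1]; positivity), n r p (by rw [e2]; positivity),
      n p w (by rw [e3]; positivity), n w q (by rw [e4]; positivity)] with y y1 y2 y3 y4
    have hneg : ori q p y = - ori p q y := by simp only [ori_def]; ring
    rcases le_total 0 (ori p q y) with h | h
    · exact hUsub _ _ _ hin ⟨h, y1.le, y2.le⟩
    · exact hUsub _ _ _ hw ⟨by linarith, y3.le, y4.le⟩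
  have hopen : IsOpen (U ∩ (polyBoundary v)ᶜ) := by
    have hBcl : IsClosed (polyBoundary v) := by
      refine isClosed_iUnion_of_finite fun i => ?_
      rw [segment_eq_image]
      exact (isCompact_Icc.image (by fun_prop)).isClosed
    rw [isOpen_iff_mem_nhds]
    rintro x ⟨hxU, hxB⟩
    refine Filter.inter_mem ?_ (hBcl.isOpen_compl.mem_nhds hxB)
    rw [hU, Set.mem_iUnion₂] at hxU
    obtain ⟨⟨p, q, r⟩, ht, hx⟩ := hxU
    have ht : (p, q, r) ∈ L := ht
    have hx : x ∈ clTri p q r := hx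
    rcases hx.1.lt_or_eq with h1 | h1
    · rcases hx.2.1.lt_or_eq with h2 | h2
      · rcases hx.2.2.lt_or_eq with h3 | h3
        · exact Filter.mem_of_superset ((opTri_open p q r).mem_nhds ⟨h1, h2, h3⟩)
            ((opTri_sub _ _ _).trans (hUsub _ _ _ (Or.inl ht)))
        · exact edge r p q x (Or.inr (Or.inl ht)) hxB (by rwa [← clTri_rot r p q]) h3.symm
      · exact edge q r p x (Or.inr (Or.inr ht)) hxB (by rwa [clTri_rot p q r]) h2.symm
    · exact edge p q r x (Or.inl ht) hxB hx h1.symm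
  intro x hx
  by_cases hxB : x ∈ polyBoundary v
  · exact Or.inl hxB
  refine Or.inr ⟨hxB, ?_⟩
  have hxU : x ∈ U := hUsub _ _ _ (Or.inl hm) hx
  refine hUb.subset ?_
  have hC : IsPreconnected (connectedComponentIn (polyBoundary v)ᶜ x) :=
    isPreconnected_connectedComponentIn
  have hCs := connectedComponentIn_subset (polyBoundary v)ᶜ x
  have hxC : x ∈ connectedComponentIn (polyBoundary v)ᶜ x := mem_connectedComponentIn hxB
  refine (hC.subset_left_of_subset_union hopen hUcl.isOpen_compl ?_ ?_
    ⟨x, hxC, hxU, hxB⟩).trans Set.inter_subset_left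
  · exact Set.disjoint_left.2 fun y hy hy' => hy' hy.1
  · intro y hy
    by_cases h : y ∈ U
    · exact Or.inl ⟨h, hCs hy⟩
    · exact Or.inr h

/-- Crossing segments are not disjoint. -/
lemma cross {p q r s : Pt} (hd : Disjoint (segment ℝ p q) (segment ℝ r s))
    (h1 : 0 ≤ ori p q r) (h2 : ori p q s ≤ 0) (h3 : ori r s p ≤ 0) (h4 : 0 ≤ ori r s q)
    (h5 : 0 < ori p q r - ori p q s) : False := by
  set D := ori p q r - ori p q s with hD
  have hD' : D = ori r s q - ori r s p := by rw [hD]; simp only [ori_def]; ring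
  have k1 : ori r s q * p.1 + (-ori r s p) * q.1 = (-ori p q s) * r.1 + ori p q r * s.1 := by
    simp only [ori_def]; ring
  have k2 : ori r s q * p.2 + (-ori r s p) * q.2 = (-ori p q s) * r.2 + ori p q r * s.2 := by
    simp only [ori_def]; ring
  refine Set.disjoint_left.1 hd (show (ori r s q / D) • p + (-ori r s p / D) • q ∈ segment ℝ p q from
    ⟨_, _, by positivity, div_nonneg (by linarith) h5.le, ?_, rfl⟩)
    ⟨-ori p q s / D, ori p q r / D, div_nonneg (by linarith) h5.le, by positivity, ?_, ?_⟩
  · rw [← add_div, div_eq_one_iff_eq h5.ne']; linarith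
  · rw [← add_div, div_eq_one_iff_eq h5.ne']; linarith
  · ext
    · simp only [Prod.fst_add, Prod.smul_fst, smul_eq_mul]
      field_simp; linarith
    · simp only [Prod.snd_add, Prod.smul_snd, smul_eq_mul]
      field_simp; linarith

/-- `d` cannot lie beyond the ray `ac`. -/
lemma half_one {bc bd be cd ce de : ℝ} (hbc : 0 < bc) (hbe : be < 0) (hce : ce < 0)
    (hcd : 0 < cd) (hde : de ≤ 0) (hcde : 0 < cd + de - ce)
    (pl : bc * de - bd * ce + be * cd = 0)
    (n1 : 0 ≤ bd → be ≤ 0 → de ≤ 0 → 0 ≤ de - be + bd → 0 < bd - be → False)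
    (n2 : 0 ≤ bc + cd - bd → bc + ce - be ≤ 0 → de - be + bd ≤ 0 → 0 ≤ de - ce + cd →
      0 < (bc + cd - bd) - (bc + ce - be) → False) : False := by
  have hbd : 0 < bd := by nlinarith [mul_pos (neg_pos.2 hbe) hcd, mul_nonneg hbc.le (neg_nonneg.2 hde)]
  have hdeb : de - be + bd < 0 := by
    by_contra h
    exact n1 hbd.le hbe.le hde (by linarith) (by linarith)
  have i1 : (de - ce + cd) * bd - (de - be + bd) * cd = (bc + cd - bd) * (-de) := by
    linear_combination pl
  have i2 : (de - ce + cd) * (-be) - (de - be + bd) * (-ce) = -(bc + ce - be) * (-de) := by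
    linear_combination -pl
  have j1 : 0 < (bc + cd - bd) * (-de) := by
    rw [← i1]; nlinarith [mul_pos (neg_pos.2 hdeb) hcd, mul_pos (show 0 < de - ce + cd by linarith) hbd]
  have j2 : 0 < -(bc + ce - be) * (-de) := by
    rw [← i2]
    nlinarith [mul_pos (neg_pos.2 hdeb) (neg_pos.2 hce),
      mul_pos (show 0 < de - ce + cd by linarith) (neg_pos.2 hbe)]
  have j3 := pos_of_mul_pos_left j1 (by linarith)
  have j4 := pos_of_mul_pos_left j2 (by linarith)
  exact n2 j3.le (by linarith) hdeb.le (by linarith) (by linarith)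

/-- `d` inside the triangle `ace`, with `b` before `d`: the area is not positive. -/
lemma half_two {bc bd be bf cd ce de df ef : ℝ} (hbc : 0 < bc) (hbe : be < 0) (hce : ce < 0)
    (hef : 0 < ef) (hbf : bf ≤ 0)
    (hcd : cd ≤ 0) (hde : de ≤ 0) (hcde : 0 < cd + de - ce) (hbd : 0 ≤ bd)
    (pl : bc * de - bd * ce + be * cd = 0)
    (pl2 : bd * ef - be * df + bf * de = 0)
    (n1 : 0 ≤ bd → be ≤ 0 → de ≤ 0 → 0 ≤ de - be + bd → 0 < bd - be → False)
    (n2 : 0 ≤ bc + cd - bd → bc + ce - be ≤ 0 → de - be + bd ≤ 0 → 0 ≤ de - ce + cd →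
      0 < (bc + cd - bd) - (bc + ce - be) → False)
    (n3 : 0 ≤ -df → -ef ≤ 0 → de ≤ 0 → 0 ≤ de + ef - df → 0 < -df + ef → False)
    (harea : 0 < bc + cd + de + ef) : False := by
  have hdeb : de - be + bd < 0 := by
    by_contra h
    exact n1 hbd hbe.le hde (by linarith) (by linarith)
  have hfd : 0 ≤ -df := by
    have : 0 ≤ (-df) * (-be) := by nlinarith [mul_nonneg hbd hef.le, mul_nonneg_of_nonpos_of_nonpos hbf hde]
    exact nonneg_of_mul_nonneg_left this (by linarith)
  have hdef : de + ef - df < 0 := by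
    by_contra h
    exact n3 hfd (by linarith) hde (by linarith) (by linarith)
  have i2 : (de - ce + cd) * (-be) - (de - be + bd) * (-ce) = -(bc + ce - be) * (-de) := by
    linear_combination -pl
  have j2 : 0 < -(bc + ce - be) * (-de) := by
    rw [← i2]
    nlinarith [mul_pos (neg_pos.2 hdeb) (neg_pos.2 hce),
      mul_pos (show 0 < de - ce + cd by linarith) (neg_pos.2 hbe)]
  have j4 := pos_of_mul_pos_left j2 (by linarith)
  have hbcd : bc + cd - bd < 0 := by
    by_contra h
    exact n2 (by linarith) (by linarith) hdeb.le (by linarith) (by linarith)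
  have hE : 0 < -de := by linarith
  have k1 : bd * ef ≤ (-be) * (-df) := by nlinarith [mul_nonneg_of_nonpos_of_nonpos hbf hde]
  have k2 : (-be) * (-df) ≤ (-de - bd) * (-de - ef) :=
    mul_le_mul (by linarith) (by linarith) hfd (by linarith)
  have k3 : 0 ≤ (-de) * (-de - bd - ef) := by nlinarith
  have k4 := nonneg_of_mul_nonneg_right k3 hE
  linarith

lemma seg_boundary {n : ℕ} [NeZero n] (v : Fin n → Pt) (i : Fin n) :
    segment ℝ (v i) (v (i + 1)) ⊆ polyBoundary v :=
  Set.subset_iUnion (fun i : Fin n => segment ℝ (v i) (v (i + 1))) i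

lemma vert_boundary {n : ℕ} [NeZero n] (v : Fin n → Pt) (i : Fin n) : v i ∈ polyBoundary v :=
  seg_boundary v i (left_mem_segment ℝ _ _)

/-- Index version of a triangulation. -/
def InI (L : List (Fin 6 × Fin 6 × Fin 6)) (p q r : Fin 6) : Prop :=
  (p, q, r) ∈ L ∨ (q, r, p) ∈ L ∨ (r, p, q) ∈ L

instance (L : List (Fin 6 × Fin 6 × Fin 6)) (p q r : Fin 6) : Decidable (InI L p q r) := by
  unfold InI; infer_instance

lemma region_of_idx (v : Fin 6 → Pt) (L : List (Fin 6 × Fin 6 × Fin 6))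
    (hE : ∀ p q r, InI L p q r → q = p + 1 ∨ ∃ s, InI L q p s)
    (hpos : ∀ t ∈ L, 0 < ori (v t.1) (v t.2.1) (v t.2.2))
    {p q r : Fin 6} (hm : InI L p q r) : Sees v (v p) (v q) := by
  have key : ∀ p q r, (p, q, r) ∈ L → clTri (v p) (v q) (v r) ⊆ polyRegion v := by
    intro p q r h
    apply region_of_tris v (L.map fun t => (v t.1, v t.2.1, v t.2.2))
    · intro t ht
      obtain ⟨i, hi, rfl⟩ := List.mem_map.1 ht
      exact hpos i hi
    · intro t ht
      obtain ⟨i, hi, rfl⟩ := List.mem_map.1 ht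
      exact ⟨vert_boundary _ _, vert_boundary _ _, vert_boundary _ _⟩
    · have up : ∀ p q r, InI L p q r →
          InL (L.map fun t => (v t.1, v t.2.1, v t.2.2)) (v p) (v q) (v r) := by
        rintro p q r (h | h | h)
        · exact Or.inl (List.mem_map.2 ⟨_, h, rfl⟩)
        · exact Or.inr (Or.inl (List.mem_map.2 ⟨_, h, rfl⟩))
        · exact Or.inr (Or.inr (List.mem_map.2 ⟨_, h, rfl⟩))
      have fin : ∀ p q r, InI L p q r → segment ℝ (v p) (v q) ⊆ polyBoundary v ∨
          ∃ s, InL (L.map fun t => (v t.1, v t.2.1, v t.2.2)) (v q) (v p) s := by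
        intro p q r h
        rcases hE p q r h with rfl | ⟨s, hs⟩
        · exact Or.inl (seg_boundary v p)
        · exact Or.inr ⟨v s, up _ _ _ hs⟩
      rintro x y z (h | h | h) <;> obtain ⟨⟨i, j, k⟩, hi, he⟩ := List.mem_map.1 h <;>
        simp only [Prod.mk.injEq] at he <;> obtain ⟨rfl, rfl, rfl⟩ := he
      · exact fin _ _ _ (Or.inl hi)
      · exact fin _ _ _ (Or.inr (Or.inl hi))
      · exact fin _ _ _ (Or.inr (Or.inr hi))
    · exact List.mem_map.2 ⟨_, h, rfl⟩
  have hp : 0 < ori (v p) (v q) (v r) := by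
    rcases hm with h | h | h
    · exact hpos _ h
    · rw [← ori_rot]; exact hpos _ h
    · rw [ori_rot (v r)]; exact hpos _ h
  refine (seg_sub hp).trans ?_
  rcases hm with h | h | h
  · exact key _ _ _ h
  · rw [← clTri_rot]; exact key _ _ _ h
  · rw [clTri_rot (v r)]; exact key _ _ _ h

lemma Sees.symm' {v : Fin 6 → Pt} {x y : Pt} (h : Sees v x y) : Sees v y x := by
  unfold Sees; rw [segment_symm]; exact h

/-- Key step in the proof of Lemma 5: under its hypotheses (hexagon `abcdef`, `a` the
only reflex vertex apart from possibly `c`, `e`, and `c` does not see `e`), the vertex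
`a` lies in the open triangle `△(cde)` and sees each of `c`, `d`, `e`. -/
theorem lemma_obstruct_key_step (v : Fin 6 → Pt)
    (hsimple : IsSimplePolygon v) (hccw : IsCCW v)
    (ha : ReflexAt v 0)
    (hb : StrictlyConvexAt v 1) (hd : StrictlyConvexAt v 3) (hf : StrictlyConvexAt v 5)
    (hce : ¬ Sees v (v 2) (v 4)) :
    v 0 ∈ openTriangle (v 2) (v 3) (v 4) ∧
      Sees v (v 0) (v 2) ∧ Sees v (v 0) (v 3) ∧ Sees v (v 0) (v 4) := by
  have hinj := hsimple.2.1
  have hS := hsimple.2.2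
  have dis : ∀ i j : Fin 6, i ≠ j → i ≠ j + 1 → i + 1 ≠ j →
      Disjoint (segment ℝ (v i) (v (i + 1))) (segment ℝ (v j) (v (j + 1))) := by
    intro i j h1 h2 h3
    rw [Set.disjoint_left]
    intro x hx hx'
    have := hS i j h1 ⟨hx, hx'⟩
    simp only [Set.mem_inter_iff, Set.mem_insert_iff, Set.mem_singleton_iff] at this
    obtain ⟨r | r, s | s⟩ := this
    · exact h1 (hinj (r.symm.trans s))
    · exact h2 (hinj (r.symm.trans s))
    · exact h3 (hinj (r.symm.trans s))
    · exact h1 (add_right_cancel (hinj (r.symm.trans s)))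
  have d03 : Disjoint (segment ℝ (v 0) (v 1)) (segment ℝ (v 3) (v 4)) :=
    dis 0 3 (by decide) (by decide) (by decide)
  have d13 : Disjoint (segment ℝ (v 1) (v 2)) (segment ℝ (v 3) (v 4)) :=
    dis 1 3 (by decide) (by decide) (by decide)
  have d14 : Disjoint (segment ℝ (v 1) (v 2)) (segment ℝ (v 4) (v 5)) :=
    dis 1 4 (by decide) (by decide) (by decide)
  have d02 : Disjoint (segment ℝ (v 0) (v 1)) (segment ℝ (v 2) (v 3)) :=
    dis 0 2 (by decide) (by decide) (by decide)
  have d42 : Disjoint (segment ℝ (v 4) (v 5)) (segment ℝ (v 2) (v 3)) :=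
    dis 4 2 (by decide) (by decide) (by decide)
  have d52 : Disjoint (segment ℝ (v 5) (v 0)) (segment ℝ (v 2) (v 3)) :=
    dis 5 2 (by decide) (by decide) (by decide)
  have d53 : Disjoint (segment ℝ (v 5) (v 0)) (segment ℝ (v 3) (v 4)) :=
    dis 5 3 (by decide) (by decide) (by decide)
  rw [segment_symm ℝ (v 2) (v 3)] at d42 d52
  have hne0 : v 4 ≠ v 0 := fun h => absurd (hinj h) (by decide)
  have hne2 : v 4 ≠ v 2 := fun h => absurd (hinj h) (by decide)
  have fan0 : 0 < ori (v 0) (v 1) (v 2) ∧ 0 < ori (v 0) (v 2) (v 3) ∧ 0 < ori (v 0) (v 3) (v 4) ∧ 0 < ori (v 0) (v 4) (v 5) →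
      Sees v (v 0) (v 2) ∧ Sees v (v 0) (v 3) ∧ Sees v (v 0) (v 4) := by
    rintro ⟨g1, g2, g3, g4⟩
    have key := @region_of_idx v [(0, 1, 2), (0, 2, 3), (0, 3, 4), (0, 4, 5)] (by decide) (by
      simp only [List.forall_mem_cons, List.not_mem_nil, false_imp_iff, implies_true, and_true]
      exact ⟨g1, g2, g3, g4⟩)
    exact ⟨@key 0 2 3 (by decide), @key 0 3 4 (by decide), @key 0 4 5 (by decide)⟩
  have fan1 : 0 < ori (v 0) (v 1) (v 2) ∧ 0 < ori (v 0) (v 2) (v 4) ∧ 0 < ori (v 2) (v 3) (v 4) ∧ 0 < ori (v 0) (v 4) (v 5) →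
      Sees v (v 2) (v 4) := by
    rintro ⟨g1, g2, g3, g4⟩
    have key := @region_of_idx v [(0, 1, 2), (0, 2, 4), (2, 3, 4), (0, 4, 5)] (by decide) (by
      simp only [List.forall_mem_cons, List.not_mem_nil, false_imp_iff, implies_true, and_true]
      exact ⟨g1, g2, g3, g4⟩)
    exact @key 2 4 0 (by decide)
  have fan2 : 0 < ori (v 0) (v 1) (v 2) ∧ 0 < ori (v 2) (v 5) (v 0) ∧ 0 < ori (v 2) (v 3) (v 4) ∧ 0 < ori (v 2) (v 4) (v 5) →
      Sees v (v 2) (v 4) := by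
    rintro ⟨g1, g2, g3, g4⟩
    have key := @region_of_idx v [(0, 1, 2), (2, 5, 0), (2, 3, 4), (2, 4, 5)] (by decide) (by
      simp only [List.forall_mem_cons, List.not_mem_nil, false_imp_iff, implies_true, and_true]
      exact ⟨g1, g2, g3, g4⟩)
    exact @key 2 4 5 (by decide)
  have fan3 : 0 < ori (v 4) (v 5) (v 0) ∧ 0 < ori (v 4) (v 0) (v 1) ∧ 0 < ori (v 4) (v 1) (v 2) ∧ 0 < ori (v 2) (v 3) (v 4) →
      Sees v (v 2) (v 4) := by
    rintro ⟨g1, g2, g3, g4⟩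
    have key := @region_of_idx v [(4, 5, 0), (4, 0, 1), (4, 1, 2), (2, 3, 4)] (by decide) (by
      simp only [List.forall_mem_cons, List.not_mem_nil, false_imp_iff, implies_true, and_true]
      exact ⟨g1, g2, g3, g4⟩)
    exact (@key 4 2 3 (by decide)).symm'
  have harea : 0 < ori (v 0) (v 1) (v 2) + ori (v 0) (v 2) (v 3) + ori (v 0) (v 3) (v 4)
      + ori (v 0) (v 4) (v 5) := by
    have h : 0 < signedArea2 v := hccw
    have : signedArea2 v = ori (v 0) (v 1) (v 2) + ori (v 0) (v 2) (v 3) + ori (v 0) (v 3) (v 4)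
      + ori (v 0) (v 4) (v 5) := by
      simp only [signedArea2, Fin.sum_univ_six, ori_def]
      change det2 (v 0) (v 1) + det2 (v 1) (v 2) + det2 (v 2) (v 3) + det2 (v 3) (v 4)
        + det2 (v 4) (v 5) + det2 (v 5) (v 0) = _
      simp only [det2]; ring
    linarith
  have ha' : ori (v 0) (v 1) (v 5) ≤ 0 := by
    have h : det2 (v 0 - v 5) (v 1 - v 0) ≤ 0 := ha
    simp only [det2, Prod.fst_sub, Prod.snd_sub] at h
    simp only [ori_def]; linarith
  have hb' : 0 < ori (v 0) (v 1) (v 2) := by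
    have h : 0 < det2 (v 1 - v 0) (v 2 - v 1) := hb
    simp only [det2, Prod.fst_sub, Prod.snd_sub] at h
    simp only [ori_def]; linarith
  have hd' : 0 < ori (v 2) (v 3) (v 4) := by
    have h : 0 < det2 (v 3 - v 2) (v 4 - v 3) := hd
    simp only [det2, Prod.fst_sub, Prod.snd_sub] at h
    simp only [ori_def]; linarith
  have hf' : 0 < ori (v 0) (v 4) (v 5) := by
    have h : 0 < det2 (v 5 - v 4) (v 0 - v 5) := hf
    simp only [det2, Prod.fst_sub, Prod.snd_sub] at h
    simp only [ori_def]; linarith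
  by_cases c1 : 0 < ori (v 0) (v 2) (v 4)
  · exact absurd (fan1 ⟨hb', c1, hd', hf'⟩) hce
  push Not at c1
  have hcde : 0 < ori (v 0) (v 2) (v 3) + ori (v 0) (v 3) (v 4) - ori (v 0) (v 2) (v 4) := by
    simp only [ori_def] at hd' ⊢; linarith
  have hf'' : 0 < ori (v 4) (v 5) (v 0) := by rw [ori_rot]; exact hf'
  have PL : ∀ p q r s : Pt, ori (v 0) p q * ori (v 0) r s - ori (v 0) p r * ori (v 0) q s
      + ori (v 0) p s * ori (v 0) q r = 0 := by
    intro p q r s; simp only [ori_def]; ring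
  have N : ∀ p q : Pt, ori (v 0) q p = - ori (v 0) p q := by
    intro p q; simp only [ori_def]; ring
  have X2 : 0 < ori (v 0) (v 2) (v 5) →
      0 < ori (v 0) (v 2) (v 4) + ori (v 0) (v 4) (v 5) - ori (v 0) (v 2) (v 5) → False := by
    intro h1 h2
    refine hce (fan2 ⟨hb', ?_, hd', ?_⟩)
    · simp only [ori_def] at h1 ⊢; linarith
    · simp only [ori_def] at h2 ⊢; linarith
  have X3 : ori (v 0) (v 1) (v 4) > 0 →
      0 < ori (v 0) (v 1) (v 2) + ori (v 0) (v 2) (v 4) - ori (v 0) (v 1) (v 4) → False := by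
    intro h1 h2
    refine hce (fan3 ⟨hf'', ?_, ?_, hd'⟩)
    · simp only [ori_def] at h1 ⊢; linarith
    · simp only [ori_def] at h2 ⊢; linarith
  rcases c1.lt_or_eq with c1 | c1
  swap
  · -- collinear case
    exfalso
    obtain ⟨l, hl⟩ : ∃ l : ℝ, v 2 - v 0 = l • (v 4 - v 0) := by
      rw [ori_def] at c1
      by_cases h1 : (v 4).1 - (v 0).1 = 0
      · have h2 : (v 4).2 - (v 0).2 ≠ 0 := fun h2 =>
          hne0 (Prod.ext (by linarith) (by linarith))
        refine ⟨((v 2).2 - (v 0).2) / ((v 4).2 - (v 0).2), ?_⟩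
        ext
        · simp only [Prod.fst_sub, Prod.smul_fst, smul_eq_mul]
          rw [h1] at c1 ⊢
          have : ((v 2).1 - (v 0).1) * ((v 4).2 - (v 0).2) = 0 := by linarith
          have := (mul_eq_zero.1 this).resolve_right h2
          rw [this]; ring
        · simp only [Prod.snd_sub, Prod.smul_snd, smul_eq_mul]
          field_simp
      · refine ⟨((v 2).1 - (v 0).1) / ((v 4).1 - (v 0).1), ?_⟩
        ext
        · simp only [Prod.fst_sub, Prod.smul_fst, smul_eq_mul]
          field_simp
        · simp only [Prod.snd_sub, Prod.smul_snd, smul_eq_mul]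
          field_simp
          linarith
    have l1 : (v 2).1 - (v 0).1 = l * ((v 4).1 - (v 0).1) := congrArg Prod.fst hl
    have l2 : (v 2).2 - (v 0).2 = l * ((v 4).2 - (v 0).2) := congrArg Prod.snd hl
    have m1 : ∀ p, ori (v 0) (v 2) p = l * ori (v 0) (v 4) p := by
      intro p; simp only [ori_def, l1, l2]; ring
    have m2 := m1 (v 5)
    have m3 := m1 (v 3)
    have m4 := m1 (v 1)
    rw [N (v 3) (v 4)] at m3
    rw [N (v 1) (v 2), N (v 1) (v 4)] at m4
    have hl0 : l ≠ 0 := by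
      rintro rfl
      linarith
    rcases lt_or_gt_of_ne hl0 with h | h
    · have h3 : 0 < ori (v 0) (v 3) (v 4) := by
        have : 0 < ori (v 0) (v 3) (v 4) * (1 - l) := by linarith
        exact pos_of_mul_pos_left this (by linarith)
      have h4 : 0 < ori (v 0) (v 2) (v 3) := by nlinarith
      obtain ⟨f1, f2, f3⟩ := fan0 ⟨hb', h4, h3, hf'⟩
      apply hce
      intro x hx
      have ht : v 0 ∈ segment ℝ (v 2) (v 4) := by
        have h1l : 0 < 1 - l := by linarith
        refine ⟨1 / (1 - l), -l / (1 - l), by positivity, div_nonneg (by linarith) h1l.le, ?_, ?_⟩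
        · field_simp; ring
        · ext
          · simp only [Prod.fst_add, Prod.smul_fst, smul_eq_mul]
            field_simp; linarith
          · simp only [Prod.snd_add, Prod.smul_snd, smul_eq_mul]
            field_simp; linarith
      have ht' : v 0 ∈ Set.range (AffineMap.lineMap (v 2) (v 4) : ℝ → Pt) := by
        rw [segment_eq_image_lineMap] at ht
        exact Set.image_subset_range _ _ ht
      have f1' := f1.symm'
      rw [← insert_endpoints_openSegment] at hx
      rcases hx with rfl | rfl | hx
      · exact f1' (left_mem_segment ℝ _ _)
      · exact f3 (right_mem_segment ℝ _ _)
      rcases openSegment_subset_union _ _ ht' hx with rfl | hx | hx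
      · exact f3 (left_mem_segment ℝ _ _)
      · exact f1' (openSegment_subset_segment _ _ _ hx)
      · exact f3 (openSegment_subset_segment _ _ _ hx)
    · rcases lt_trichotomy l 1 with h1 | h1 | h1
      · exact X2 (by rw [m2]; positivity) (by rw [c1, m2]; nlinarith)
      · subst h1
        exact hne2 (Prod.ext (by linarith) (by linarith))
      · have : 0 < ori (v 0) (v 1) (v 4) := by
          have : 0 < ori (v 0) (v 1) (v 4) * l := by linarith
          exact pos_of_mul_pos_left this h.le
        exact X3 this (by rw [c1]; nlinarith)
  have p1 := PL (v 1) (v 2) (v 4) (v 5)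
  rcases le_or_gt 0 (ori (v 0) (v 1) (v 4)) with h | h
  · exfalso
    have q : 0 < ori (v 0) (v 1) (v 4) * ori (v 0) (v 2) (v 5) := by
      nlinarith [mul_pos hb' hf', mul_nonneg_of_nonpos_of_nonpos ha' c1.le]
    have h1 : 0 < ori (v 0) (v 1) (v 4) := by
      rcases h.lt_or_eq with h | h
      · exact h
      · rw [← h] at q; linarith
    have h2 : 0 < ori (v 0) (v 2) (v 5) := pos_of_mul_pos_right q h
    have y2 : ori (v 0) (v 2) (v 4) + ori (v 0) (v 4) (v 5) - ori (v 0) (v 2) (v 5) ≤ 0 := by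
      by_contra hh
      exact X2 h2 (by linarith)
    have y3 : ori (v 0) (v 1) (v 2) + ori (v 0) (v 2) (v 4) - ori (v 0) (v 1) (v 4) ≤ 0 := by
      by_contra hh
      exact X3 h1 (by linarith)
    have y4 : 0 < ori (v 0) (v 1) (v 2) + ori (v 0) (v 2) (v 5) - ori (v 0) (v 1) (v 5) := by
      linarith
    have y5 : 0 < ori (v 0) (v 4) (v 5) - ori (v 0) (v 1) (v 5) + ori (v 0) (v 1) (v 4) := by
      linarith
    rw [segment_symm ℝ (v 4) (v 5)] at d14
    refine cross d14 ?_ ?_ ?_ ?_ ?_ <;> simp only [ori_def] at y2 y3 y4 y5 ⊢ <;> linarith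
  have h' : ori (v 0) (v 2) (v 5) < 0 := by
    have q : 0 < ori (v 0) (v 1) (v 4) * ori (v 0) (v 2) (v 5) := by
      nlinarith [mul_pos hb' hf', mul_nonneg_of_nonpos_of_nonpos ha' c1.le]
    exact neg_of_mul_pos_right q h.le
  have pl := PL (v 1) (v 2) (v 3) (v 4)
  have pl' := PL (v 2) (v 3) (v 4) (v 5)
  have pl2 := PL (v 1) (v 3) (v 4) (v 5)
  have pl2' := PL (v 1) (v 2) (v 3) (v 5)
  have n1 : 0 ≤ ori (v 0) (v 1) (v 3) → ori (v 0) (v 1) (v 4) ≤ 0 → ori (v 0) (v 3) (v 4) ≤ 0 →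
      0 ≤ ori (v 0) (v 3) (v 4) - ori (v 0) (v 1) (v 4) + ori (v 0) (v 1) (v 3) →
      0 < ori (v 0) (v 1) (v 3) - ori (v 0) (v 1) (v 4) → False := by
    intro h1 h2 h3 h4 h5
    refine cross d03 ?_ ?_ ?_ ?_ ?_ <;> simp only [ori_def] at h1 h2 h3 h4 h5 ⊢ <;> linarith
  have n1' : 0 ≤ ori (v 0) (v 3) (v 5) → ori (v 0) (v 2) (v 5) ≤ 0 → ori (v 0) (v 2) (v 3) ≤ 0 →
      0 ≤ ori (v 0) (v 2) (v 3) - ori (v 0) (v 2) (v 5) + ori (v 0) (v 3) (v 5) →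
      0 < ori (v 0) (v 3) (v 5) - ori (v 0) (v 2) (v 5) → False := by
    intro h1 h2 h3 h4 h5
    refine cross d52 ?_ ?_ ?_ ?_ ?_ <;> simp only [ori_def] at h1 h2 h3 h4 h5 ⊢ <;> linarith
  have n2 : 0 ≤ ori (v 0) (v 1) (v 2) + ori (v 0) (v 2) (v 3) - ori (v 0) (v 1) (v 3) →
      ori (v 0) (v 1) (v 2) + ori (v 0) (v 2) (v 4) - ori (v 0) (v 1) (v 4) ≤ 0 →
      ori (v 0) (v 3) (v 4) - ori (v 0) (v 1) (v 4) + ori (v 0) (v 1) (v 3) ≤ 0 →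
      0 ≤ ori (v 0) (v 3) (v 4) - ori (v 0) (v 2) (v 4) + ori (v 0) (v 2) (v 3) →
      0 < (ori (v 0) (v 1) (v 2) + ori (v 0) (v 2) (v 3) - ori (v 0) (v 1) (v 3)) -
        (ori (v 0) (v 1) (v 2) + ori (v 0) (v 2) (v 4) - ori (v 0) (v 1) (v 4)) → False := by
    intro h1 h2 h3 h4 h5
    refine cross d13 ?_ ?_ ?_ ?_ ?_ <;> simp only [ori_def] at h1 h2 h3 h4 h5 ⊢ <;> linarith
  have n2' : 0 ≤ ori (v 0) (v 4) (v 5) + ori (v 0) (v 3) (v 4) - ori (v 0) (v 3) (v 5) →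
      ori (v 0) (v 4) (v 5) + ori (v 0) (v 2) (v 4) - ori (v 0) (v 2) (v 5) ≤ 0 →
      ori (v 0) (v 2) (v 3) - ori (v 0) (v 2) (v 5) + ori (v 0) (v 3) (v 5) ≤ 0 →
      0 ≤ ori (v 0) (v 2) (v 3) - ori (v 0) (v 2) (v 4) + ori (v 0) (v 3) (v 4) →
      0 < (ori (v 0) (v 4) (v 5) + ori (v 0) (v 3) (v 4) - ori (v 0) (v 3) (v 5)) -
        (ori (v 0) (v 4) (v 5) + ori (v 0) (v 2) (v 4) - ori (v 0) (v 2) (v 5)) → False := by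
    intro h1 h2 h3 h4 h5
    refine cross d42 ?_ ?_ ?_ ?_ ?_ <;> simp only [ori_def] at h1 h2 h3 h4 h5 ⊢ <;> linarith
  have n3 : 0 ≤ -ori (v 0) (v 3) (v 5) → -ori (v 0) (v 4) (v 5) ≤ 0 →
      ori (v 0) (v 3) (v 4) ≤ 0 →
      0 ≤ ori (v 0) (v 3) (v 4) + ori (v 0) (v 4) (v 5) - ori (v 0) (v 3) (v 5) →
      0 < -ori (v 0) (v 3) (v 5) + ori (v 0) (v 4) (v 5) → False := by
    intro h1 h2 h3 h4 h5
    rw [segment_symm ℝ (v 5) (v 0)] at d53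
    refine cross d53 ?_ ?_ ?_ ?_ ?_ <;> simp only [ori_def] at h1 h2 h3 h4 h5 ⊢ <;> linarith
  have n3' : 0 ≤ -ori (v 0) (v 1) (v 3) → -ori (v 0) (v 1) (v 2) ≤ 0 →
      ori (v 0) (v 2) (v 3) ≤ 0 →
      0 ≤ ori (v 0) (v 2) (v 3) + ori (v 0) (v 1) (v 2) - ori (v 0) (v 1) (v 3) →
      0 < -ori (v 0) (v 1) (v 3) + ori (v 0) (v 1) (v 2) → False := by
    intro h1 h2 h3 h4 h5
    rw [segment_symm ℝ (v 0) (v 1), segment_symm ℝ (v 2) (v 3)] at d02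
    refine cross d02 ?_ ?_ ?_ ?_ ?_ <;> simp only [ori_def] at h1 h2 h3 h4 h5 ⊢ <;> linarith
  by_cases hcd : 0 < ori (v 0) (v 2) (v 3)
  · by_cases hde : 0 < ori (v 0) (v 3) (v 4)
    · refine ⟨?_, fan0 ⟨hb', hcd, hde, hf'⟩⟩
      refine interior_maximal ((opTri_sub _ _ _).trans (clTri_hull hd')) (opTri_open _ _ _) ?_
      refine ⟨?_, ?_, ?_⟩
      · rw [ori_rot]; exact hcd
      · rw [ori_rot]; exact hde
      · rw [ori_rot, N (v 2) (v 4)]; linarith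
    · exact (half_one hb' h c1 hcd (not_lt.1 hde) hcde pl n1 n2).elim
  exfalso
  push Not at hcd
  by_cases hde : 0 < ori (v 0) (v 3) (v 4)
  · exact half_one hf' h' c1 hde hcd (by linarith) (by linarith) n1' n2'
  push Not at hde
  by_cases hbd : 0 ≤ ori (v 0) (v 1) (v 3)
  · exact half_two hb' h c1 hf' ha' hcd hde hcde hbd pl pl2 n1 n2 n3 (by linarith)
  by_cases hdf : 0 ≤ ori (v 0) (v 3) (v 5)
  · exact half_two hf' h' c1 hb' ha' hde hcd (by linarith) hdf (by linarith) (by linarith)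
      n1' n2' n3' (by linarith)
  push Not at hbd hdf
  have z1 : ori (v 0) (v 3) (v 4) + ori (v 0) (v 4) (v 5) - ori (v 0) (v 3) (v 5) < 0 := by
    by_contra hh
    exact n3 (by linarith) (by linarith) hde (by linarith) (by linarith)
  have z2 : ori (v 0) (v 2) (v 3) + ori (v 0) (v 1) (v 2) - ori (v 0) (v 1) (v 3) < 0 := by
    by_contra hh
    exact n3' (by linarith) (by linarith) hcd (by linarith) (by linarith)
  linarith
end

section
/- Every strictly convex hexagon (simple hexagon all of whose interior angles are strictly less than 180°) can be partitioned into two strictly convex quadrilaterals by one of its main diagonals, using no Steiner points. -/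
open scoped BigOperators

/-- Orientation of a triple of points. -/
noncomputable def o (p q r : Pt) : ℝ :=
  (q.1 - p.1) * (r.2 - p.2) - (q.2 - p.2) * (r.1 - p.1)

/-- Sign form of the statement that the segments `p q` and `r s` do not cross. -/
def NC (p q r s : Pt) : Prop :=
  o p q r * o p q s ≤ 0 → o r s p * o r s q ≤ 0 →
    o p q r = 0 ∧ o p q s = 0 ∧ o r s p = 0 ∧ o r s q = 0

theorem lem1 (a b c d e f : Pt)
    (t0 : 0 < o a b c) (t1 : 0 < o b c d) (t2 : 0 < o c d e) (t3 : 0 < o d e f) (t4 : 0 < o a e f) (t5 : 0 < o a b f)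
    (N45 : NC a b c d) (N46 : NC a b d e) (N47 : NC a b e f) (N48 : NC b c d e) (N49 : NC b c e f) (N50 : NC b c a f) (N51 : NC c d e f) (N52 : NC c d a f) (N53 : NC d e a f) :
    0 < o a b d := by
  by_contra hg
  rw [not_lt] at hg
  have GP0 : 0 + o a b c * o a d e - o a b d * o a c e + o a b e * o a c d = 0 := by simp only [o]; ring
  have GP1 : 0 + o a b c * o a d f - o a b d * o a c f + o a b f * o a c d = 0 := by simp only [o]; ring
  have GP2 : 0 + o a b c * o a e f - o a b e * o a c f + o a b f * o a c e = 0 := by simp only [o]; ring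
  have GP4 : 0 + o a c d * o a e f - o a c e * o a d f + o a c f * o a d e = 0 := by simp only [o]; ring
  have GP5 : 0 - o a b c * o b d e + o a b d * o b c e - o a b e * o b c d = 0 := by simp only [o]; ring
  have GP6 : 0 - o a b c * o b d f + o a b d * o b c f - o a b f * o b c d = 0 := by simp only [o]; ring
  have GP7 : 0 - o a b c * o b e f + o a b e * o b c f - o a b f * o b c e = 0 := by simp only [o]; ring
  have GP8 : 0 - o a b d * o b e f + o a b e * o b d f - o a b f * o b d e = 0 := by simp only [o]; ring
  have GP17 : 0 + o a b d * o d e f - o a d e * o b d f + o a d f * o b d e = 0 := by simp only [o]; ring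
  have GP21 : 0 - o a b e * o c e f + o a c e * o b e f - o a e f * o b c e = 0 := by simp only [o]; ring
  have GP24 : 0 - o b c e * o d e f + o b d e * o c e f - o b e f * o c d e = 0 := by simp only [o]; ring
  have GP25 : 0 + o a b f * o c d f - o a c f * o b d f + o a d f * o b c f = 0 := by simp only [o]; ring
  have GP26 : 0 + o a b f * o c e f - o a c f * o b e f + o a e f * o b c f = 0 := by simp only [o]; ring
  have GP28 : 0 + o a c f * o d e f - o a d f * o c e f + o a e f * o c d f = 0 := by simp only [o]; ring
  have GP34 : o a b d - o a b f + o a d f - o b d f = 0 := by simp only [o]; ring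
  have GP38 : o a c e - o a c f + o a e f - o c e f = 0 := by simp only [o]; ring
  have GP45 : o a b c * o a b d ≤ 0 → o a c d * o b c d ≤ 0 →
      o a b c = 0 ∧ o a b d = 0 ∧ o a c d = 0 ∧ o b c d = 0 := by
    intro u w
    have := N45 (by simp only [o] at u ⊢; linarith only [u]) (by simp only [o] at w ⊢; linarith only [w])
    simp only [o] at this ⊢
    refine ⟨?_, ?_, ?_, ?_⟩ <;> linarith only [this.1, this.2.1, this.2.2.1, this.2.2.2]
  have GP46 : o a b d * o a b e ≤ 0 → o a d e * o b d e ≤ 0 →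
      o a b d = 0 ∧ o a b e = 0 ∧ o a d e = 0 ∧ o b d e = 0 := by
    intro u w
    have := N46 (by simp only [o] at u ⊢; linarith only [u]) (by simp only [o] at w ⊢; linarith only [w])
    simp only [o] at this ⊢
    refine ⟨?_, ?_, ?_, ?_⟩ <;> linarith only [this.1, this.2.1, this.2.2.1, this.2.2.2]
  have GP47 : o a b e * o a b f ≤ 0 → o a e f * o b e f ≤ 0 →
      o a b e = 0 ∧ o a b f = 0 ∧ o a e f = 0 ∧ o b e f = 0 := by
    intro u w
    have := N47 (by simp only [o] at u ⊢; linarith only [u]) (by simp only [o] at w ⊢; linarith only [w])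
    simp only [o] at this ⊢
    refine ⟨?_, ?_, ?_, ?_⟩ <;> linarith only [this.1, this.2.1, this.2.2.1, this.2.2.2]
  have GP49 : o b c e * o b c f ≤ 0 → o b e f * o c e f ≤ 0 →
      o b c e = 0 ∧ o b c f = 0 ∧ o b e f = 0 ∧ o c e f = 0 := by
    intro u w
    have := N49 (by simp only [o] at u ⊢; linarith only [u]) (by simp only [o] at w ⊢; linarith only [w])
    simp only [o] at this ⊢
    refine ⟨?_, ?_, ?_, ?_⟩ <;> linarith only [this.1, this.2.1, this.2.2.1, this.2.2.2]
  have GP50 : o a b c * o b c f ≤ 0 → o a b f * o a c f ≤ 0 →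
      o a b c = 0 ∧ o b c f = 0 ∧ o a b f = 0 ∧ o a c f = 0 := by
    intro u w
    have := N50 (by simp only [o] at u ⊢; linarith only [u]) (by simp only [o] at w ⊢; linarith only [w])
    simp only [o] at this ⊢
    refine ⟨?_, ?_, ?_, ?_⟩ <;> linarith only [this.1, this.2.1, this.2.2.1, this.2.2.2]
  have GP52 : o a c d * o c d f ≤ 0 → o a c f * o a d f ≤ 0 →
      o a c d = 0 ∧ o c d f = 0 ∧ o a c f = 0 ∧ o a d f = 0 := by
    intro u w
    have := N52 (by simp only [o] at u ⊢; linarith only [u]) (by simp only [o] at w ⊢; linarith only [w])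
    simp only [o] at this ⊢
    refine ⟨?_, ?_, ?_, ?_⟩ <;> linarith only [this.1, this.2.1, this.2.2.1, this.2.2.2]
  have GP53 : o a d e * o d e f ≤ 0 → o a d f * o a e f ≤ 0 →
      o a d e = 0 ∧ o d e f = 0 ∧ o a d f = 0 ∧ o a e f = 0 := by
    intro u w
    have := N53 (by simp only [o] at u ⊢; linarith only [u]) (by simp only [o] at w ⊢; linarith only [w])
    simp only [o] at this ⊢
    refine ⟨?_, ?_, ?_, ?_⟩ <;> linarith only [this.1, this.2.1, this.2.2.1, this.2.2.2]
  have k1 : 0 < o a c d := by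
    by_contra hn
    rw [not_lt] at hn
    obtain ⟨z1, z2, z3, z4⟩ := GP45 (mul_nonpos_of_nonneg_of_nonpos t0.le hg) (mul_nonpos_of_nonpos_of_nonneg hn t1.le)
    linarith only [t0, hg, hn, t1, z1, z2, z3, z4]
  rcases lt_or_ge 0 (o a c f) with s2 | s2
  · have k3 : o a d f < 0 := by
      by_contra hn
      rw [not_lt] at hn
      nlinarith only [(mul_nonneg t0.le hn), (mul_nonpos_of_nonpos_of_nonneg hg s2.le), (mul_pos t5 k1), GP1]
    have k4 : o b d f < 0 := by
      by_contra hn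
      rw [not_lt] at hn
      linarith only [hg, t5, k3, hn, GP34]
    have k5 : 0 < o c d f := by
      by_contra hn
      rw [not_lt] at hn
      obtain ⟨z1, z2, z3, z4⟩ := GP52 (mul_nonpos_of_nonneg_of_nonpos k1.le hn) (le_of_lt <| mul_neg_of_pos_of_neg s2 k3)
      linarith only [k1, s2, k3, hn, z1, z2, z3, z4]
    have k6 : 0 < o a d e := by
      by_contra hn
      rw [not_lt] at hn
      obtain ⟨z1, z2, z3, z4⟩ := GP53 (mul_nonpos_of_nonpos_of_nonneg hn t3.le) (le_of_lt <| mul_neg_of_neg_of_pos k3 t4)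
      linarith only [hn, k3, t4, t3, z1, z2, z3, z4]
    have k7 : 0 < o b c f := by
      by_contra hn
      rw [not_lt] at hn
      nlinarith only [(mul_pos t5 k5), (mul_neg_of_pos_of_neg s2 k4), (mul_nonneg_of_nonpos_of_nonpos k3.le hn), GP25]
    have k8 : o c e f < 0 := by
      by_contra hn
      rw [not_lt] at hn
      nlinarith only [(mul_pos s2 t3), (mul_nonpos_of_nonpos_of_nonneg k3.le hn), (mul_pos t4 k5), GP28]
    have k9 : o a c e < 0 := by
      by_contra hn
      rw [not_lt] at hn
      nlinarith only [(mul_pos k1 t4), (mul_nonpos_of_nonneg_of_nonpos hn k3.le), (mul_pos s2 k6), GP4]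
    rcases lt_or_ge 0 (o a b e) with s10 | s10
    · have k11 : o a b d < 0 := by
        by_contra hn
        rw [not_lt] at hn
        nlinarith only [(mul_pos t0 k6), (mul_nonpos_of_nonneg_of_nonpos hn k9.le), (mul_pos s10 k1), GP0]
      have k12 : 0 < o b d e := by
        by_contra hn
        rw [not_lt] at hn
        obtain ⟨z1, z2, z3, z4⟩ := GP46 (le_of_lt <| mul_neg_of_neg_of_pos k11 s10) (mul_nonpos_of_nonneg_of_nonpos k6.le hn)
        linarith only [k11, s10, k6, hn, z1, z2, z3, z4]
      have k13 : o b c e < 0 := by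
        by_contra hn
        rw [not_lt] at hn
        nlinarith only [(mul_pos t0 k12), (mul_nonpos_of_nonpos_of_nonneg k11.le hn), (mul_pos s10 t1), GP5]
      have k14 : 0 < o b e f := by
        by_contra hn
        rw [not_lt] at hn
        nlinarith only [(mul_nonneg_of_nonpos_of_nonpos k11.le hn), (mul_neg_of_pos_of_neg s10 k4), (mul_pos t5 k12), GP8]
      obtain ⟨z1, z2, z3, z4⟩ := GP49 (le_of_lt <| mul_neg_of_neg_of_pos k13 k7) (le_of_lt <| mul_neg_of_pos_of_neg k14 k8)
      linarith only [k13, k7, k14, k8, z1, z2, z3, z4]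
    · have k15 : 0 < o b e f := by
        by_contra hn
        rw [not_lt] at hn
        obtain ⟨z1, z2, z3, z4⟩ := GP47 (mul_nonpos_of_nonpos_of_nonneg s10 t5.le) (mul_nonpos_of_nonneg_of_nonpos t4.le hn)
        linarith only [s10, t5, t4, hn, z1, z2, z3, z4]
      have k16 : 0 < o b c e := by
        by_contra hn
        rw [not_lt] at hn
        obtain ⟨z1, z2, z3, z4⟩ := GP49 (mul_nonpos_of_nonpos_of_nonneg hn k7.le) (le_of_lt <| mul_neg_of_pos_of_neg k15 k8)
        linarith only [hn, k7, k15, k8, z1, z2, z3, z4]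
      nlinarith only [(mul_pos t0 k15), (mul_nonpos_of_nonpos_of_nonneg s10 k7.le), (mul_pos t5 k16), GP7]
  · have k17 : 0 < o b c f := by
      by_contra hn
      rw [not_lt] at hn
      obtain ⟨z1, z2, z3, z4⟩ := GP50 (mul_nonpos_of_nonneg_of_nonpos t0.le hn) (mul_nonpos_of_nonneg_of_nonpos t5.le s2)
      linarith only [t0, t5, s2, hn, z1, z2, z3, z4]
    have k18 : o b d f < 0 := by
      by_contra hn
      rw [not_lt] at hn
      nlinarith only [(mul_nonneg t0.le hn), (mul_nonpos_of_nonpos_of_nonneg hg k17.le), (mul_pos t5 t1), GP6]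
    rcases lt_or_ge 0 (o b e f) with s20 | s20
    · have k21 : o c e f < 0 := by
        by_contra hn
        rw [not_lt] at hn
        nlinarith only [(mul_nonneg t5.le hn), (mul_nonpos_of_nonpos_of_nonneg s2 s20.le), (mul_pos t4 k17), GP26]
      have k22 : o a c e < 0 := by
        by_contra hn
        rw [not_lt] at hn
        linarith only [hn, s2, t4, k21, GP38]
      have k23 : 0 < o b c e := by
        by_contra hn
        rw [not_lt] at hn
        obtain ⟨z1, z2, z3, z4⟩ := GP49 (mul_nonpos_of_nonpos_of_nonneg hn k17.le) (le_of_lt <| mul_neg_of_pos_of_neg s20 k21)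
        linarith only [hn, k17, s20, k21, z1, z2, z3, z4]
      have k24 : 0 < o a b e := by
        by_contra hn
        rw [not_lt] at hn
        nlinarith only [(mul_nonneg_of_nonpos_of_nonpos hn k21.le), (mul_neg_of_neg_of_pos k22 s20), (mul_pos t4 k23), GP21]
      have k25 : o b d e < 0 := by
        by_contra hn
        rw [not_lt] at hn
        nlinarith only [(mul_pos k23 t3), (mul_nonpos_of_nonneg_of_nonpos hn k21.le), (mul_pos s20 t2), GP24]
      have k26 : o a d e < 0 := by
        by_contra hn
        rw [not_lt] at hn
        obtain ⟨z1, z2, z3, z4⟩ := GP46 (mul_nonpos_of_nonpos_of_nonneg hg k24.le) (mul_nonpos_of_nonneg_of_nonpos hn k25.le)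
        linarith only [hg, k24, hn, k25, z1, z2, z3, z4]
      have k27 : o a d f < 0 := by
        by_contra hn
        rw [not_lt] at hn
        nlinarith only [(mul_nonpos_of_nonpos_of_nonneg hg t3.le), (mul_pos_of_neg_of_neg k26 k18), (mul_nonpos_of_nonneg_of_nonpos hn k25.le), GP17]
      obtain ⟨z1, z2, z3, z4⟩ := GP53 (le_of_lt <| mul_neg_of_neg_of_pos k26 t3) (le_of_lt <| mul_neg_of_neg_of_pos k27 t4)
      linarith only [k26, k27, t4, t3, z1, z2, z3, z4]
    · have k28 : 0 < o a b e := by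
        by_contra hn
        rw [not_lt] at hn
        obtain ⟨z1, z2, z3, z4⟩ := GP47 (mul_nonpos_of_nonpos_of_nonneg hn t5.le) (mul_nonpos_of_nonneg_of_nonpos t4.le s20)
        linarith only [hn, t5, t4, s20, z1, z2, z3, z4]
      have k29 : o a c e < 0 := by
        by_contra hn
        rw [not_lt] at hn
        nlinarith only [(mul_pos t0 t4), (mul_nonpos_of_nonneg_of_nonpos k28.le s2), (mul_nonneg t5.le hn), GP2]
      have k31 : o b d e < 0 := by
        by_contra hn
        rw [not_lt] at hn
        nlinarith only [(mul_nonneg_of_nonpos_of_nonpos hg s20), (mul_neg_of_pos_of_neg k28 k18), (mul_nonneg t5.le hn), GP8]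
      have k32 : o a d e < 0 := by
        by_contra hn
        rw [not_lt] at hn
        obtain ⟨z1, z2, z3, z4⟩ := GP46 (mul_nonpos_of_nonpos_of_nonneg hg k28.le) (mul_nonpos_of_nonneg_of_nonpos hn k31.le)
        linarith only [hg, k28, hn, k31, z1, z2, z3, z4]
      have k33 : o a d f < 0 := by
        by_contra hn
        rw [not_lt] at hn
        nlinarith only [(mul_pos k1 t4), (mul_nonpos_of_nonpos_of_nonneg k29.le hn), (mul_nonneg_of_nonpos_of_nonpos s2 k32.le), GP4]
      obtain ⟨z1, z2, z3, z4⟩ := GP53 (le_of_lt <| mul_neg_of_neg_of_pos k32 t3) (le_of_lt <| mul_neg_of_neg_of_pos k33 t4)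
      linarith only [k32, k33, t4, t3, z1, z2, z3, z4]

theorem lem2 (a b c d e f : Pt)
    (t0 : 0 < o a b c) (t1 : 0 < o b c d) (t2 : 0 < o c d e) (t3 : 0 < o d e f) (t4 : 0 < o a e f) (t5 : 0 < o a b f) (t6 : 0 < o a b d) (t7 : 0 < o b c e) (t8 : 0 < o c d f) (t9 : 0 < o a d e) (t10 : 0 < o b e f) (t11 : 0 < o a c f)
    (N45 : NC a b c d) (N46 : NC a b d e) (N47 : NC a b e f) (N48 : NC b c d e) (N49 : NC b c e f) (N50 : NC b c a f) (N51 : NC c d e f) (N52 : NC c d a f) (N53 : NC d e a f) :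
    0 < o a b e := by
  by_contra hg
  rw [not_lt] at hg
  have GP3 : 0 + o a b d * o a e f - o a b e * o a d f + o a b f * o a d e = 0 := by simp only [o]; ring
  have GP5 : 0 - o a b c * o b d e + o a b d * o b c e - o a b e * o b c d = 0 := by simp only [o]; ring
  have GP7 : 0 - o a b c * o b e f + o a b e * o b c f - o a b f * o b c e = 0 := by simp only [o]; ring
  have GP11 : 0 + o a b c * o c d f - o a c d * o b c f + o a c f * o b c d = 0 := by simp only [o]; ring
  have GP15 : 0 - o a b d * o c d e + o a c d * o b d e - o a d e * o b c d = 0 := by simp only [o]; ring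
  have k2 : o a b e < 0 := by
    by_contra hn
    rw [not_lt] at hn
    rw [le_antisymm hg hn] at GP3
    nlinarith only [(mul_pos t6 t4), (mul_pos t5 t9), GP3]
  have k4 : 0 < o b d e := by
    by_contra hn
    rw [not_lt] at hn
    nlinarith only [(mul_nonpos_of_nonneg_of_nonpos t0.le hn), (mul_pos t6 t7), (mul_neg_of_neg_of_pos k2 t1), GP5]
  have k5 : o b c f < 0 := by
    by_contra hn
    rw [not_lt] at hn
    nlinarith only [(mul_pos t0 t10), (mul_nonpos_of_nonpos_of_nonneg k2.le hn), (mul_pos t5 t7), GP7]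
  have k7 : o a c d < 0 := by
    by_contra hn
    rw [not_lt] at hn
    nlinarith only [(mul_pos t0 t8), (mul_nonpos_of_nonneg_of_nonpos hn k5.le), (mul_pos t11 t1), GP11]
  nlinarith only [(mul_pos t6 t2), (mul_neg_of_neg_of_pos k7 k4), (mul_pos t9 t1), GP15]

theorem o_cyc (a b c : Pt) : o a b c = o b c a := by simp only [o]; ring

theorem NC_of_disjoint (p q r s : Pt) (h : segment ℝ p q ∩ segment ℝ r s = ∅) : NC p q r s := by
  intro h1 h2
  have hD : o p q s - o p q r = o r s p - o r s q := by simp only [o]; ring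
  by_cases hx : o p q s - o p q r = 0
  · have e1 : o p q s = o p q r := by linarith
    have e2 : o r s p = o r s q := by linarith
    rw [e1] at h1 ⊢
    rw [e2] at h2 ⊢
    have a1 : o p q r = 0 := by nlinarith
    have a2 : o r s q = 0 := by nlinarith
    exact ⟨a1, a1, a2, a2⟩
  · exfalso
    have key : ∀ x y : ℝ, y - x ≠ 0 → x * y ≤ 0 → 0 ≤ x / (x - y) ∧ x / (x - y) ≤ 1 := by
      intro x y hxy hm
      have hne : x - y ≠ 0 := fun h => hxy (by linarith)
      rcases lt_or_gt_of_ne hne with hl | hl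
      · have : x ≤ 0 := by by_contra hc; nlinarith
        have : 0 ≤ y := by by_contra hc; nlinarith
        exact ⟨div_nonneg_of_nonpos (by linarith) hl.le, by rw [div_le_one_of_neg hl]; linarith⟩
      · have : 0 ≤ x := by by_contra hc; nlinarith
        have : y ≤ 0 := by by_contra hc; nlinarith
        exact ⟨div_nonneg (by linarith) hl.le, by rw [div_le_one hl]; linarith⟩
    have k1 := key _ _ hx h1
    have hx' : o r s q - o r s p ≠ 0 := fun h => hx (by linarith)
    have k2 := key _ _ hx' h2
    have n1 : o p q r - o p q s ≠ 0 := fun h => hx (by linarith)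
    have n2 : o r s p - o r s q ≠ 0 := fun h => hx (by linarith)
    have hm : AffineMap.lineMap p q (o r s p / (o r s p - o r s q)) ∈ segment ℝ p q ∩ segment ℝ r s := by
      constructor
      · rw [segment_eq_image_lineMap]
        exact ⟨_, k2, rfl⟩
      · rw [segment_eq_image_lineMap]
        refine ⟨_, k1, ?_⟩
        have n3 : o p q r - o p q s = -(o r s p - o r s q) := by linarith
        rw [n3]
        have : ∀ t u : ℝ, ∀ D : ℝ, D ≠ 0 → (r.1 * D - u * (s.1 - r.1) = p.1 * D + t * (q.1 - p.1)) →
            (r.2 * D - u * (s.2 - r.2) = p.2 * D + t * (q.2 - p.2)) →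
            AffineMap.lineMap r s (u / -D) = AffineMap.lineMap p q (t / D) := by
          intro t u D hD e1 e2
          simp only [AffineMap.lineMap_apply]
          ext
          · simp
            field_simp
            linarith
          · simp
            field_simp
            linarith
        apply this _ _ _ n2
        · simp only [o]; ring
        · simp only [o]; ring
    rw [h] at hm
    exact hm

theorem convex_comb3 {S : Set Pt} (hS : Convex ℝ S) {a b c x : Pt} (ha : a ∈ S) (hb : b ∈ S)
    (hc : c ∈ S) {u w t : ℝ} (hu : 0 ≤ u) (hw : 0 ≤ w) (ht : 0 ≤ t) (h1 : u + w + t = 1)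
    (hx : u • a + w • b + t • c = x) : x ∈ S := by
  have := hS.sum_mem (t := Finset.univ) (w := ![u, w, t]) (z := ![a, b, c])
    (by intro i _; fin_cases i <;> simpa) (by simpa [Fin.sum_univ_three] using h1)
    (by intro i _; fin_cases i <;> simpa)
  simp [Fin.sum_univ_three] at this
  rwa [← hx]

theorem mem_of_triangle {S : Set Pt} (hS : Convex ℝ S) {a b c x : Pt} (ha : a ∈ S) (hb : b ∈ S)
    (hc : c ∈ S) (h : 0 < o a b c) (h1 : 0 ≤ o a b x) (h2 : 0 ≤ o b c x) (h3 : 0 ≤ o c a x) :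
    x ∈ S := by
  have hne := h.ne'
  refine convex_comb3 hS ha hb hc (div_nonneg h2 h.le) (div_nonneg h3 h.le) (div_nonneg h1 h.le) ?_ ?_
  · rw [← add_div, ← add_div, div_eq_one_iff_eq hne]
    simp only [o]; ring
  · ext
    · simp
      field_simp
      simp only [o]; ring
    · simp
      field_simp
      simp only [o]; ring

theorem convex_half (a b : Pt) : Convex ℝ {x | 0 ≤ o a b x} := by
  intro x hx y hy s t hs ht hst
  simp only [Set.mem_ofPred_eq] at *
  have : o a b (s • x + t • y) = s * o a b x + t * o a b y := by
    have : s = 1 - t := by linarith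
    subst this
    simp [o]; ring
  rw [this]; positivity

theorem convex_neg (a b : Pt) : Convex ℝ {x | o a b x < 0} := by
  intro x hx y hy s t hs ht hst
  simp only [Set.mem_ofPred_eq] at *
  have : o a b (s • x + t • y) = s * o a b x + t * o a b y := by
    have : s = 1 - t := by linarith
    subst this
    simp [o]; ring
  rw [this]
  rcases hs.eq_or_lt with h | h
  · have : t = 1 := by linarith
    subst this; subst h; simpa using hy
  · have := mul_neg_of_pos_of_neg h hx
    have := mul_nonpos_of_nonneg_of_nonpos ht hy.le
    linarith

theorem continuous_o (a b : Pt) : Continuous (fun x => o a b x) := by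
  unfold o; fun_prop

theorem hull_quad (a b c d : Pt) (h1 : 0 < o a b c) (h2 : 0 < o b c d) (h3 : 0 < o c d a)
    (h4 : 0 < o d a b) : convexHull ℝ {a, b, c, d} =
      {x | 0 ≤ o a b x ∧ 0 ≤ o b c x ∧ 0 ≤ o c d x ∧ 0 ≤ o d a x} := by
  apply Set.Subset.antisymm
  · apply convexHull_min
    · have z : ∀ p q, o p q p = 0 ∧ o p q q = 0 := by
        intro p q; constructor <;> simp only [o] <;> ring
      have c1 := o_cyc b c a
      have c2 := o_cyc a b c
      have c3 := o_cyc c d b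
      have c4 := o_cyc b c d
      have c5 := o_cyc d a c
      have c6 := o_cyc c d a
      have c7 := o_cyc a b d
      have c8 := o_cyc d a b
      intro x hx
      simp only [Set.mem_insert_iff, Set.mem_singleton_iff] at hx
      simp only [Set.mem_ofPred_eq]
      rcases hx with rfl | rfl | rfl | rfl <;> simp only [z, le_refl, true_and, and_true] <;>
        (constructor <;> linarith)
    · exact (convex_half a b).inter ((convex_half b c).inter ((convex_half c d).inter (convex_half d a)))
  · rintro x ⟨x1, x2, x3, x4⟩
    have hc := convex_convexHull ℝ ({a, b, c, d} : Set Pt)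
    have m : ∀ y ∈ ({a, b, c, d} : Set Pt), y ∈ convexHull ℝ ({a, b, c, d} : Set Pt) :=
      fun y hy => subset_convexHull ℝ _ hy
    have ma := m a (by simp)
    have mb := m b (by simp)
    have mc := m c (by simp)
    have md := m d (by simp)
    have e : o c a x = - o a c x := by simp only [o]; ring
    rcases le_total 0 (o a c x) with h | h
    · refine mem_of_triangle hc mc md ma h3 x3 x4 h
    · refine mem_of_triangle hc ma mb mc h1 x1 x2 (by linarith)

/-- The intersection of the closed left half-planes of the edges. -/
def CC (v : Fin 6 → Pt) : Set Pt := {x | ∀ i, 0 ≤ o (v i) (v (i + 1)) x}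

theorem convex_CC (v : Fin 6 → Pt) : Convex ℝ (CC v) := by
  have : CC v = ⋂ i, {x | 0 ≤ o (v i) (v (i + 1)) x} := by ext; simp [CC]
  rw [this]
  exact convex_iInter fun i => convex_half _ _

/-- All vertices lie strictly to the left of all edges not containing them. -/
def Glob (v : Fin 6 → Pt) : Prop := ∀ i : Fin 6,
  0 < o (v i) (v (i + 1)) (v (i + 2)) ∧ 0 < o (v i) (v (i + 1)) (v (i + 3)) ∧
  0 < o (v i) (v (i + 1)) (v (i + 4)) ∧ 0 < o (v i) (v (i + 1)) (v (i + 5))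

theorem o_self1 (a b : Pt) : o a b a = 0 := by simp only [o]; ring
theorem o_self2 (a b : Pt) : o a b b = 0 := by simp only [o]; ring

theorem vert_mem (v : Fin 6 → Pt) (hg : Glob v) (j : Fin 6) : v j ∈ CC v := by
  intro i
  obtain ⟨h2, h3, h4, h5⟩ := hg i
  obtain ⟨k, rfl⟩ : ∃ k, j = i + k := ⟨j - i, by simp⟩
  fin_cases k
  · simpa using (o_self1 (v i) (v (i + 1))).ge
  · exact (o_self2 (v i) (v (i + 1))).ge
  · exact h2.le
  · exact h3.le
  · exact h4.le
  · exact h5.le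

theorem boundary_subset (v : Fin 6 → Pt) (hg : Glob v) : polyBoundary v ⊆ CC v :=
  Set.iUnion_subset fun i => (convex_CC v).segment_subset (vert_mem v hg i) (vert_mem v hg (i + 1))

theorem mem_boundary (v : Fin 6 → Pt) (hg : Glob v) (x : Pt) (hx : x ∈ CC v) (i : Fin 6)
    (h0 : o (v i) (v (i + 1)) x = 0) : x ∈ polyBoundary v := by
  refine Set.mem_iUnion.2 ⟨i, ?_⟩
  have h1 := hx (i + 1)
  have h2 := hx (i + 5)
  have e1 : i + 1 + 1 = i + 2 := by rw [add_assoc]; rfl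
  have e2 : i + 5 + 1 = i := by rw [add_assoc]; exact add_zero i
  rw [e1] at h1
  rw [e2] at h2
  obtain ⟨g2, g3, g4, g5⟩ := hg i
  have g5' := g5
  rw [← o_cyc] at g5'
  generalize v i = a at *
  generalize v (i + 1) = b at *
  generalize v (i + 2) = c at *
  generalize v (i + 5) = f at *
  have key : x ∈ segment ℝ a b := by
    have n1 := g2.ne'
    have n2 := g5.ne'
    -- barycentric coordinates with respect to the triangle `a b c`
    have hb : o b c x ≤ o a b c := by
      have q : o a b f * (o a b c - o b c x) = o a b c * o f a x + o a b x * (o a b c - o b c f) := by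
        simp only [o]; ring
      rw [h0] at q
      have := mul_nonneg g2.le h2
      by_contra hc
      nlinarith
    rw [segment_eq_image_lineMap]
    refine ⟨1 - o b c x / o a b c, ⟨?_, ?_⟩, ?_⟩
    · rw [sub_nonneg, div_le_one g2]; exact hb
    · have := div_nonneg h1 g2.le
      linarith
    · have r1 : o a b c * x.1 = o b c x * a.1 + (o a b c - o b c x) * b.1 + o a b x * (c.1 - b.1) := by
        simp only [o]; ring
      have r2 : o a b c * x.2 = o b c x * a.2 + (o a b c - o b c x) * b.2 + o a b x * (c.2 - b.2) := by
        simp only [o]; ring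
      rw [h0] at r1 r2
      simp only [AffineMap.lineMap_apply]
      ext
      · simp
        field_simp
        linarith
      · simp
        field_simp
        linarith
  exact key

theorem unbdd_half (a b : Pt) (hab : a ≠ b) : ¬ Bornology.IsBounded {x | o a b x < 0} := by
  intro hB
  obtain ⟨R, hR⟩ := hB.exists_norm_le
  have hn : 0 < (b.1 - a.1) ^ 2 + (b.2 - a.2) ^ 2 := by
    by_contra hc
    apply hab
    ext <;> nlinarith [sq_nonneg (b.1 - a.1), sq_nonneg (b.2 - a.2)]
  have hmem : ∀ t : ℝ, 0 < t → (a.1 + t * (b.2 - a.2), a.2 - t * (b.1 - a.1)) ∈ {x | o a b x < 0} := by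
    intro t ht
    simp only [Set.mem_ofPred_eq, o]
    nlinarith [mul_pos ht hn]
  have hb : ∀ t : ℝ, 0 < t → |a.1 + t * (b.2 - a.2)| ≤ R ∧ |a.2 - t * (b.1 - a.1)| ≤ R := by
    intro t ht
    have := hR _ (hmem t ht)
    rw [Prod.norm_def] at this
    exact ⟨(le_max_left _ _).trans this, (le_max_right _ _).trans this⟩
  have aux : ∀ p q : ℝ, q ≠ 0 → ¬ ∀ t : ℝ, 0 < t → |p + t * q| ≤ R := by
    intro p q hq hh
    have h0 : 0 < |q| := abs_pos.2 hq
    have hR0 : 0 ≤ R := (abs_nonneg _).trans (hh 1 one_pos)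
    have := hh ((R + |p| + 1) / |q|) (by positivity)
    have h3 : |(R + |p| + 1) / |q| * q| = R + |p| + 1 := by
      rw [abs_mul, abs_div, abs_abs, div_mul_cancel₀ _ h0.ne', abs_of_nonneg (by positivity)]
    have h4 := abs_sub_abs_le_abs_sub ((R + |p| + 1) / |q| * q) (-p)
    rw [h3, abs_neg, sub_neg_eq_add, add_comm _ p] at h4
    linarith
  by_cases h2 : b.2 - a.2 = 0
  · have h1 : -(b.1 - a.1) ≠ 0 := by
      intro h1
      rw [neg_eq_zero] at h1
      rw [h1, h2] at hn
      norm_num at hn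
    exact aux a.2 _ h1 fun t ht => by
      have := (hb t ht).2
      rwa [sub_eq_add_neg, ← mul_neg] at this
  · exact aux a.1 _ h2 fun t ht => (hb t ht).1

theorem region_eq (v : Fin 6 → Pt) (hg : Glob v) (hinj : Function.Injective v)
    (hbd : Bornology.IsBounded (CC v)) : polyRegion v = CC v := by
  apply Set.Subset.antisymm
  · rintro x (hx | ⟨hx, hb⟩)
    · exact boundary_subset v hg hx
    · by_contra hc
      simp only [CC, Set.mem_ofPred_eq, not_forall, not_le] at hc
      obtain ⟨i, hi⟩ := hc
      have hsub : {y | o (v i) (v (i + 1)) y < 0} ⊆ connectedComponentIn (polyBoundary v)ᶜ x := by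
        apply (convex_neg (v i) (v (i + 1))).isPreconnected.subset_connectedComponentIn hi
        intro y hy hy'
        exact absurd (boundary_subset v hg hy' i) (not_le.2 hy)
      refine unbdd_half (v i) (v (i + 1)) ?_ (hb.subset hsub)
      intro h
      have := hinj h
      simp at this
  · intro x hx
    by_cases hxb : x ∈ polyBoundary v
    · exact Or.inl hxb
    · refine Or.inr ⟨hxb, hbd.subset ?_⟩
      have hpos : ∀ y ∈ CC v, y ∉ polyBoundary v → ∀ i, 0 < o (v i) (v (i + 1)) y := by
        intro y hy hyb i
        exact lt_of_le_of_ne (hy i) fun h => hyb (mem_boundary v hg y hy i h.symm)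
      have hoU : IsOpen {y | ∀ i, 0 < o (v i) (v (i + 1)) y} := by
        have : {y | ∀ i, 0 < o (v i) (v (i + 1)) y} = ⋂ i, {y | 0 < o (v i) (v (i + 1)) y} := by
          ext; simp
        rw [this]
        exact isOpen_iInter_of_finite fun i => isOpen_lt continuous_const (continuous_o _ _)
      have hoV : IsOpen (CC v)ᶜ := by
        have : CC v = ⋂ i, {y | 0 ≤ o (v i) (v (i + 1)) y} := by ext; simp [CC]
        rw [this, isOpen_compl_iff]
        exact isClosed_iInter fun i => isClosed_le continuous_const (continuous_o _ _)
      have hsub : connectedComponentIn (polyBoundary v)ᶜ x ⊆ {y | ∀ i, 0 < o (v i) (v (i + 1)) y} := by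
        refine isPreconnected_connectedComponentIn.subset_left_of_subset_union hoU hoV ?_ ?_ ?_
        · rw [Set.disjoint_left]
          intro y hy hy'
          exact hy' fun i => (hy i).le
        · intro y hy
          have hyb := connectedComponentIn_subset _ _ hy
          by_cases hc : y ∈ CC v
          · exact Or.inl (hpos y hc hyb)
          · exact Or.inr hc
        · exact ⟨x, mem_connectedComponentIn hxb, hpos x hx hxb⟩
      exact fun y hy i => (hsub hy i).le

theorem interior_disj (a d : Pt) (had : a ≠ d) (S T : Set Pt) (hS : S ⊆ {x | 0 ≤ o a d x})
    (hT : T ⊆ {x | o a d x ≤ 0}) : interior S ∩ interior T = ∅ := by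
  rw [← interior_inter]
  by_contra hne
  obtain ⟨x, hx⟩ := Set.nonempty_iff_ne_empty.2 hne
  have hz : ∀ y ∈ S ∩ T, o a d y = 0 := fun y hy => le_antisymm (hT hy.2) (hS hy.1)
  let γ : ℝ → Pt := fun t => (x.1 - t * (d.2 - a.2), x.2 + t * (d.1 - a.1))
  have hγ : Continuous γ := by fun_prop
  have h0 : γ 0 = x := by ext <;> simp [γ]
  have hev : ∀ᶠ t in nhds (0 : ℝ), γ t ∈ interior (S ∩ T) :=
    hγ.continuousAt.eventually_mem (isOpen_interior.mem_nhds (by rw [h0]; exact hx))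
  have hev' : ∀ᶠ t in nhdsWithin (0 : ℝ) (Set.Ioi 0), γ t ∈ interior (S ∩ T) ∧ 0 < t :=
    (hev.filter_mono nhdsWithin_le_nhds).and self_mem_nhdsWithin
  obtain ⟨t, ht, htp⟩ := hev'.exists
  have e1 := hz _ (interior_subset ht)
  have e2 := hz _ (interior_subset hx)
  have e3 : o a d (γ t) = o a d x + t * ((d.1 - a.1) ^ 2 + (d.2 - a.2) ^ 2) := by
    simp only [o, γ]; ring
  rw [e1, e2, zero_add] at e3
  have e4 := (mul_eq_zero.1 e3.symm).resolve_left htp.ne'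
  apply had
  ext <;> nlinarith [sq_nonneg (d.1 - a.1), sq_nonneg (d.2 - a.2)]

theorem glob_of_simple (v : Fin 6 → Pt) (hs : IsSimplePolygon v)
    (hconv : ∀ i : Fin 6, StrictlyConvexAt v i) : Glob v := by
  have nc0 : ∀ i j : Fin 6, i ≠ j → i + 1 ≠ j → i ≠ j + 1 →
      segment ℝ (v i) (v (i + 1)) ∩ segment ℝ (v j) (v (j + 1)) = ∅ := by
    intro i j h1 h2 h3
    apply Set.eq_empty_of_subset_empty
    refine (hs.2.2 i j h1).trans ?_
    rintro x ⟨hx, hy⟩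
    simp only [Set.mem_insert_iff, Set.mem_singleton_iff] at hx hy
    rcases hx with rfl | rfl <;> rcases hy with hy | hy <;> have := hs.2.1 hy
    · exact h1 this
    · exact h3 this
    · exact h2 this
    · exact h1 (add_right_cancel this)
  have turn : ∀ i : Fin 6, 0 < o (v i) (v (i + 1)) (v (i + 2)) := by
    intro i
    have h := hconv (i + 1)
    unfold StrictlyConvexAt at h
    have e1 : i + 1 + 1 = i + 2 := by rw [add_assoc]; rfl
    rw [e1, add_sub_cancel_right] at h
    simp only [det2, o, Prod.fst_sub, Prod.snd_sub] at h ⊢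
    linarith
  have A : ∀ i j k : Fin 6, i + j + k = i + (j + k) := fun i j k => add_assoc i j k
  have N : ∀ i k l : Fin 6, k ≠ l → k + 1 ≠ l → k ≠ l + 1 →
      segment ℝ (v (i + k)) (v (i + (k + 1))) ∩ segment ℝ (v (i + l)) (v (i + (l + 1))) = ∅ := by
    intro i k l h1 h2 h3
    have := nc0 (i + k) (i + l) (by simpa using h1)
      (by rw [A]; simpa using h2) (by rw [A]; simpa using h3)
    rwa [A, A] at this
  have T : ∀ i k : Fin 6, 0 < o (v (i + k)) (v (i + (k + 1))) (v (i + (k + 2))) := by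
    intro i k
    have := turn (i + k)
    rwa [A, A] at this
  have N0 : ∀ i : Fin 6, _ := fun i => N i 0 2 (by decide) (by decide) (by decide)
  have N1 : ∀ i : Fin 6, _ := fun i => N i 0 3 (by decide) (by decide) (by decide)
  have N2 : ∀ i : Fin 6, _ := fun i => N i 0 4 (by decide) (by decide) (by decide)
  have N3 : ∀ i : Fin 6, _ := fun i => N i 1 3 (by decide) (by decide) (by decide)
  have N4 : ∀ i : Fin 6, _ := fun i => N i 1 4 (by decide) (by decide) (by decide)
  have N5 : ∀ i : Fin 6, _ := fun i => N i 1 5 (by decide) (by decide) (by decide)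
  have N6 : ∀ i : Fin 6, _ := fun i => N i 2 4 (by decide) (by decide) (by decide)
  have N7 : ∀ i : Fin 6, _ := fun i => N i 2 5 (by decide) (by decide) (by decide)
  have N8 : ∀ i : Fin 6, _ := fun i => N i 3 5 (by decide) (by decide) (by decide)
  have L1 : ∀ i : Fin 6, 0 < o (v (i + 0)) (v (i + 1)) (v (i + 3)) := by
    intro i
    have n5 := N5 i
    have n7 := N7 i
    have n8 := N8 i
    rw [segment_symm ℝ (v (i + 5))] at n5 n7 n8
    exact lem1 (v (i + 0)) (v (i + 1)) (v (i + 2)) (v (i + 3)) (v (i + 4)) (v (i + 5))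
      (T i 0) (T i 1) (T i 2) (T i 3) (by rw [o_cyc]; exact T i 4)
      (by rw [← o_cyc]; exact T i 5)
      (NC_of_disjoint _ _ _ _ (N0 i)) (NC_of_disjoint _ _ _ _ (N1 i))
      (NC_of_disjoint _ _ _ _ (N2 i)) (NC_of_disjoint _ _ _ _ (N3 i))
      (NC_of_disjoint _ _ _ _ (N4 i)) (NC_of_disjoint _ _ _ _ n5)
      (NC_of_disjoint _ _ _ _ (N6 i)) (NC_of_disjoint _ _ _ _ n7)
      (NC_of_disjoint _ _ _ _ n8)
  have M : ∀ i k : Fin 6, 0 < o (v (i + k)) (v (i + (k + 1))) (v (i + (k + 3))) := by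
    intro i k
    have := L1 (i + k)
    rwa [A, A, A, add_zero] at this
  have L2 : ∀ i : Fin 6, 0 < o (v (i + 0)) (v (i + 1)) (v (i + 4)) := by
    intro i
    have n5 := N5 i
    have n7 := N7 i
    have n8 := N8 i
    rw [segment_symm ℝ (v (i + 5))] at n5 n7 n8
    exact lem2 (v (i + 0)) (v (i + 1)) (v (i + 2)) (v (i + 3)) (v (i + 4)) (v (i + 5))
      (T i 0) (T i 1) (T i 2) (T i 3) (by rw [o_cyc]; exact T i 4)
      (by rw [← o_cyc]; exact T i 5)
      (M i 0) (M i 1) (M i 2) (by rw [o_cyc]; exact M i 3)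
      (by rw [o_cyc]; exact M i 4) (by rw [← o_cyc]; exact M i 5)
      (NC_of_disjoint _ _ _ _ (N0 i)) (NC_of_disjoint _ _ _ _ (N1 i))
      (NC_of_disjoint _ _ _ _ (N2 i)) (NC_of_disjoint _ _ _ _ (N3 i))
      (NC_of_disjoint _ _ _ _ (N4 i)) (NC_of_disjoint _ _ _ _ n5)
      (NC_of_disjoint _ _ _ _ (N6 i)) (NC_of_disjoint _ _ _ _ n7)
      (NC_of_disjoint _ _ _ _ n8)
  intro i
  have l1 := L1 i
  have l2 := L2 i
  have l3 := T i 5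
  rw [add_zero] at l1 l2
  refine ⟨turn i, l1, l2, ?_⟩
  rw [← o_cyc]
  have e1 : i + (5 + 1) = i := add_zero i
  have e2 : i + (5 + 2) = i + 1 := rfl
  rwa [e1, e2] at l3

theorem quad_of_o (a b c d : Pt) (h1 : 0 < o a b c) (h2 : 0 < o b c d) (h3 : 0 < o c d a)
    (h4 : 0 < o d a b) : StrictConvexQuad a b c d := by
  simp only [StrictConvexQuad, det2, o, Prod.fst_sub, Prod.snd_sub] at *
  refine ⟨?_, ?_, ?_, ?_⟩ <;> linarith

/-- A strictly convex hexagon can be partitioned into two strictly convex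
quadrilaterals by one of its main diagonals, with no Steiner points. -/
theorem convex_hexagon_splits_into_two_convex_quads (v : Fin 6 → Pt)
    (hsimple : IsSimplePolygon v) (hccw : IsCCW v)
    (hconv : ∀ i : Fin 6, StrictlyConvexAt v i) :
    ∃ i : Fin 6,
      StrictConvexQuad (v i) (v (i + 1)) (v (i + 2)) (v (i + 3)) ∧
      StrictConvexQuad (v (i + 3)) (v (i + 4)) (v (i + 5)) (v i) ∧
      convexHull ℝ {v i, v (i + 1), v (i + 2), v (i + 3)} ∪
        convexHull ℝ {v (i + 3), v (i + 4), v (i + 5), v i} = polyRegion v ∧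
      interior (convexHull ℝ {v i, v (i + 1), v (i + 2), v (i + 3)}) ∩
        interior (convexHull ℝ {v (i + 3), v (i + 4), v (i + 5), v i}) = ∅ := by
  have hg := glob_of_simple v hsimple hconv
  have a1 : 0 < o (v 0) (v 1) (v 2) := (hg 0).1
  have a2 : 0 < o (v 1) (v 2) (v 3) := (hg 1).1
  have a3 : 0 < o (v 2) (v 3) (v 0) := (hg 2).2.2.1
  have a4 : 0 < o (v 3) (v 0) (v 1) := by rw [o_cyc]; exact (hg 0).2.1
  have b1 : 0 < o (v 3) (v 4) (v 5) := (hg 3).1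
  have b2 : 0 < o (v 4) (v 5) (v 0) := (hg 4).1
  have b3 : 0 < o (v 5) (v 0) (v 3) := (hg 5).2.2.1
  have b4 : 0 < o (v 0) (v 3) (v 4) := by rw [o_cyc]; exact (hg 3).2.1
  have hQ1 := hull_quad _ _ _ _ a1 a2 a3 a4
  have hQ2 := hull_quad _ _ _ _ b1 b2 b3 b4
  have hsw : ∀ x, o (v 3) (v 0) x = - o (v 0) (v 3) x := by
    intro x; simp only [o]; ring
  have hU : convexHull ℝ {v 0, v 1, v 2, v 3} ∪ convexHull ℝ {v 3, v 4, v 5, v 0} = CC v := by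
    apply Set.Subset.antisymm
    · apply Set.union_subset <;> apply convexHull_min _ (convex_CC v) <;> intro x hx <;>
        simp only [Set.mem_insert_iff, Set.mem_singleton_iff] at hx <;>
        rcases hx with rfl | rfl | rfl | rfl <;> exact vert_mem v hg _
    · intro x hx
      have x0 : 0 ≤ o (v 0) (v 1) x := hx 0
      have x1 : 0 ≤ o (v 1) (v 2) x := hx 1
      have x2 : 0 ≤ o (v 2) (v 3) x := hx 2
      have x3 : 0 ≤ o (v 3) (v 4) x := hx 3
      have x4 : 0 ≤ o (v 4) (v 5) x := hx 4
      have x5 : 0 ≤ o (v 5) (v 0) x := hx 5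
      rcases le_total 0 (o (v 0) (v 3) x) with h | h
      · right; rw [hQ2]; exact ⟨x3, x4, x5, h⟩
      · left; rw [hQ1]; exact ⟨x0, x1, x2, by rw [hsw]; linarith⟩
  have hbd : Bornology.IsBounded (CC v) := by
    rw [← hU]
    refine Bornology.IsBounded.union ?_ ?_ <;> rw [isBounded_convexHull] <;>
      exact (Set.toFinite _).isBounded
  refine ⟨0, ?_⟩
  simp only [zero_add]
  refine ⟨quad_of_o _ _ _ _ a1 a2 a3 a4, quad_of_o _ _ _ _ b1 b2 b3 b4, ?_, ?_⟩
  · rw [hU, region_eq v hg hsimple.2.1 hbd]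
  · apply interior_disj (v 3) (v 0)
    · intro h
      have := hsimple.2.1 h
      exact absurd this (by decide)
    · rw [hQ1]; exact fun x hx => hx.2.2.2
    · rw [hQ2]; intro x hx
      have := hx.2.2.2
      simp only [Set.mem_ofPred_eq, hsw]
      linarith
end
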